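/- Every ℤ₃-flow-critical graph G that is not isomorphic to K₂ satisfies |E(G)| ≤ 4|V(G)| − 10. -/

import Mathlib

/-!
Graphs are replaced by multigraphs with labelled edges: a vertex set `S`, a label set `E` and the
ordered pair of ends `g e` of each edge. The correction term `cz k` is `0, 3, 5, 6, 6, …` for
`k = 1, 2, 3, 4, 5, …`, and a multigraph has property `Zc` if every identification of its vertices
into `k ≥ 2` classes leaves at least `4k - 3 - cz k` edges.

The core is `sol_of_zc`: a multigraph with `Zc` has a nowhere-zero `ℤ₃`-flow for every boundary.
Granting this, a set `T` of at least two vertices of a flow-critical graph cannot have `Zc`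
(`not_zc`). Indeed `Zc` makes `T` connected, so by criticality the contraction of `T` has a
nowhere-zero flow. This flow prescribes demands on the vertices of `T`, which the edges inside `T`
can meet, and hence `G` would have a nowhere-zero flow. On the other hand, if no subset of `T` of
size at least two has `Zc`, then `T` spans at most `4|T| - 4 - cz |T|` edges (`deficiency`): `Zc`
fails at some partition of `T`, and the bound for `T` follows by adding up the bounds for the
parts. For `T = V` and `|V| ≥ 4` this is `4|V| - 10`. On one vertex and on the triangle there is
a nowhere-zero flow, and `K₂` is excluded, which settles `|V| ≤ 3`.

For `sol_of_zc`, a proper subset of size at least two with `Zc` is contracted. If there is none,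
then `deficiency` bounds the number of edges inside every proper subset, so cuts are large and no
two edges are parallel. When all degrees are at least six, every cut has size at least six and the
theorem of Lovász, Thomassen, Wu and Zhang (`ext_of_hyp`) provides the flow. Otherwise there is a
vertex of degree five: two of its edges are lifted, the other three meet its demand, and the
remaining multigraph still has `Zc` (`step_degree_five`).

The theorem `ext_of_hyp` extends a flow prescribed at a vertex `z` of small degree. By induction,
a set whose cut condition has no slack is contracted (`step_contract`), parallel edges away from
`z` are contracted (`step_parallel`), and vertices of degree four with zero demand are lifted away
(`step_lift`). An edge whose deletion, with a fixed flow value, keeps both end conditions is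
deleted (`step_delete`). If none of this applies, all vertices other than `z` favour the same sign,
and an edge at a neighbour of `z` can be attached to `z` instead (`step_flip`).
-/

open scoped Classical

section FlowDefs

variable {V : Type} [Fintype V] [DecidableEq V] {A : Type} [AddCommGroup A]

/-- `β` is an `A`-boundary for `G`: its values sum to zero on every connected component. -/
def IsBoundary (G : SimpleGraph V) (β : V → A) : Prop :=
  ∀ x : V, ∑ v ∈ Finset.univ.filter (fun v => G.Reachable v x), β v = 0

/-- `(G, β)` has a nowhere-zero flow: an antisymmetric function on ordered adjacent pairs,
never zero on edges, whose out-sum at each vertex `u` is `β u`. -/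
def HasNZFlow (G : SimpleGraph V) (β : V → A) : Prop :=
  ∃ f : V → V → A,
    (∀ u v, G.Adj u v → f u v = - f v u) ∧
    (∀ u v, G.Adj u v → f u v ≠ 0) ∧
    (∀ u : V, ∑ v ∈ Finset.univ.filter (fun v => G.Adj u v), f u v = β u)

/-- `(G, β)/P` has a nowhere-zero flow, where the partition `P` of `V(G)` is given as a setoid:
an antisymmetric, nowhere-zero function on the ordered adjacent pairs lying in distinct parts,
such that for every part, the sum of the values leaving the part is the sum of `β` on it. -/
def HasNZFlowQuot (G : SimpleGraph V) (β : V → A) (P : Setoid V) : Prop :=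
  ∃ f : V → V → A,
    (∀ u v, G.Adj u v → ¬ P.r u v → f u v = - f v u) ∧
    (∀ u v, G.Adj u v → ¬ P.r u v → f u v ≠ 0) ∧
    (∀ x : V,
      ∑ u ∈ Finset.univ.filter (fun u => P.r u x),
        ∑ v ∈ Finset.univ.filter (fun v => G.Adj u v ∧ ¬ P.r u v), f u v
      = ∑ v ∈ Finset.univ.filter (fun v => P.r v x), β v)

/-- The partition `P` is `G`-connected: every part induces a connected subgraph of `G`. -/
def PartsConnected (G : SimpleGraph V) (P : Setoid V) : Prop :=
  ∀ x : V, (G.induce {v | P.r v x}).Connected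

/-- `(G, β)` is a flow-critical `A`-bordered graph: `β` is an `A`-boundary, `G` is connected,
`(G, β)` has no nowhere-zero flow, but `(G, β)/P` has one for every `G`-connected partition `P`
with at least one part of size at least two. -/
def FlowCritical (G : SimpleGraph V) (β : V → A) : Prop :=
  IsBoundary G β ∧ G.Connected ∧ ¬ HasNZFlow G β ∧
  ∀ P : Setoid V, PartsConnected G P → (∃ x y : V, x ≠ y ∧ P.r x y) →
    HasNZFlowQuot G β P

end FlowDefs

namespace FlowDensity

noncomputable section

variable {V ι : Type}

/-- Indicator of the edge with ends `p` crossing the vertex set `A`. -/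
def cut (p : V × V) (A : Finset V) : ℕ := if (p.1 ∈ A ↔ p.2 ∈ A) then 0 else 1

/-- Signed incidence of the vertex `v` with the edge `p`, directed from `p.1` to `p.2`. -/
def inc (p : V × V) (v : V) : ZMod 3 := (if p.1 = v then 1 else 0) - (if p.2 = v then 1 else 0)

/-- Signed incidence of a vertex set with a directed edge. -/
def incS (p : V × V) (A : Finset V) : ZMod 3 :=
  (if p.1 ∈ A then 1 else 0) - (if p.2 ∈ A then 1 else 0)

/-- Size of the edge cut of `A` in the multigraph with edge labels `E` and ends `g`. -/
def deg (E : Finset ι) (g : ι → V × V) (A : Finset V) : ℕ := ∑ e ∈ E, cut (g e) A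

/-- Net outflow of `x` at `v`. -/
def net (E : Finset ι) (g : ι → V × V) (x : ι → ZMod 3) (v : V) : ZMod 3 :=
  ∑ e ∈ E, x e * inc (g e) v

/-- `(S, E, g)` is a loopless multigraph with vertex set `S` and edge labels `E`, the edge `e`
having the ordered pair of ends `g e`. -/
def Wf (S : Finset V) (E : Finset ι) (g : ι → V × V) : Prop :=
  ∀ e ∈ E, (g e).1 ∈ S ∧ (g e).2 ∈ S ∧ (g e).1 ≠ (g e).2

/-- `x` is a nowhere-zero `ℤ₃`-flow with boundary `β`. -/
def Sol (S : Finset V) (E : Finset ι) (g : ι → V × V) (β : V → ZMod 3) (x : ι → ZMod 3) : Prop :=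
  (∀ e ∈ E, x e ≠ 0) ∧ ∀ v ∈ S, net E g x v = β v

/-- `v` is an end of the edge `p`. -/
def At (p : V × V) (v : V) : Prop := p.1 = v ∨ p.2 = v

/-- The multigraph boundary pushed forward along an identification `φ` of vertices. -/
def push (S : Finset V) (φ : V → V) (β : V → ZMod 3) (w : V) : ZMod 3 :=
  ∑ v ∈ S.filter (fun v => φ v = w), β v

/-- The ends of the edges after an identification `φ` of vertices. -/
def mapE (g : ι → V × V) (φ : V → V) (e : ι) : V × V := (φ (g e).1, φ (g e).2)

/-- The edges that do not become loops after an identification `φ` of vertices. -/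
def quoE (E : Finset ι) (g : ι → V × V) (φ : V → V) : Finset ι :=
  E.filter (fun e => φ (g e).1 ≠ φ (g e).2)

/-- The identification of all vertices of `A` with `a`. -/
def con (A : Finset V) (a : V) (v : V) : V := if v ∈ A then a else v

lemma net_congr {E : Finset ι} {g : ι → V × V} {x y : ι → ZMod 3} {v : V}
    (h : ∀ e ∈ E, At (g e) v → x e = y e) : net E g x v = net E g y v := by
  unfold net
  refine Finset.sum_congr rfl fun e he => ?_
  by_cases hA : At (g e) v
  · rw [h e he hA]
  · have : inc (g e) v = 0 := by
      unfold At at hA; push Not at hA; simp [inc, hA.1, hA.2]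
    rw [this, mul_zero, mul_zero]

lemma inc_of_not_at {p : V × V} {v : V} (hA : ¬ At p v) : inc p v = 0 := by
  unfold At at hA; push Not at hA; simp [inc, hA.1, hA.2]

lemma sum_inc (p : V × V) (A : Finset V) : ∑ v ∈ A, inc p v = incS p A := by
  unfold inc incS
  rw [Finset.sum_sub_distrib, Finset.sum_ite_eq, Finset.sum_ite_eq]

lemma sum_net (E : Finset ι) (g : ι → V × V) (x : ι → ZMod 3) (A : Finset V) :
    ∑ v ∈ A, net E g x v = ∑ e ∈ E, x e * incS (g e) A := by
  unfold net
  rw [Finset.sum_comm]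
  refine Finset.sum_congr rfl fun e _ => ?_
  rw [← Finset.mul_sum, sum_inc]

lemma sum_net_eq_zero {S : Finset V} {E : Finset ι} {g : ι → V × V} (hw : Wf S E g)
    (x : ι → ZMod 3) : ∑ v ∈ S, net E g x v = 0 := by
  rw [sum_net]
  refine Finset.sum_eq_zero fun e he => ?_
  obtain ⟨h1, h2, -⟩ := hw e he
  simp [incS, h1, h2]

lemma incS_of_cut_eq_zero {p : V × V} {A : Finset V} (h : cut p A = 0) : incS p A = 0 := by
  unfold cut at h; unfold incS
  split_ifs at h with h1
  by_cases h2 : p.2 ∈ A <;> simp [h1, h2]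

lemma incS_of_cut_ne_zero {p : V × V} {A : Finset V} (h : cut p A ≠ 0) : incS p A ≠ 0 := by
  unfold cut at h; unfold incS
  by_cases h1 : p.1 ∈ A <;> by_cases h2 : p.2 ∈ A <;> simp_all

lemma cut_le_one (p : V × V) (A : Finset V) : cut p A ≤ 1 := by
  unfold cut; split_ifs <;> simp

lemma cut_eq (p : V × V) (A : Finset V) : cut p A = 0 ∨ cut p A = 1 := by
  have := cut_le_one p A; omega

lemma sol_of_erase {S : Finset V} {E : Finset ι} {g : ι → V × V} {β : V → ZMod 3}
    {x : ι → ZMod 3} (hw : Wf S E g) (hβ : ∑ v ∈ S, β v = 0) (hx : ∀ e ∈ E, x e ≠ 0) {a : V}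
    (ha : a ∈ S) (h : ∀ v ∈ S, v ≠ a → net E g x v = β v) : Sol S E g β x := by
  refine ⟨hx, fun v hv => ?_⟩
  by_cases hva : v = a
  · subst hva
    have h1 := sum_net_eq_zero hw x
    rw [← Finset.add_sum_erase _ _ hv] at h1 hβ
    have h2 : ∑ u ∈ S.erase v, net E g x u = ∑ u ∈ S.erase v, β u :=
      Finset.sum_congr rfl fun u hu => h u (Finset.mem_of_mem_erase hu) (Finset.ne_of_mem_erase hu)
    rw [h2] at h1
    exact add_right_cancel (h1.trans hβ.symm)
  · exact h v hv hva

/-! ### Identification of vertices -/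

lemma wf_quo {S : Finset V} {E : Finset ι} {g : ι → V × V} (hw : Wf S E g) (φ : V → V) :
    Wf (S.image φ) (quoE E g φ) (mapE g φ) := by
  intro e he
  obtain ⟨he, hne⟩ := Finset.mem_filter.1 he
  obtain ⟨h1, h2, -⟩ := hw e he
  exact ⟨Finset.mem_image_of_mem _ h1, Finset.mem_image_of_mem _ h2, hne⟩

lemma sum_push (S : Finset V) (φ : V → V) (β : V → ZMod 3) (B : Finset V) :
    ∑ w ∈ B, push S φ β w = ∑ v ∈ S.filter (fun v => φ v ∈ B), β v := by
  unfold push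
  rw [Finset.sum_filter, Finset.sum_congr rfl (fun w _ => Finset.sum_filter _ _), Finset.sum_comm]
  refine Finset.sum_congr rfl fun v _ => ?_
  rw [Finset.sum_ite_eq]

lemma sum_push_image (S : Finset V) (φ : V → V) (β : V → ZMod 3) :
    ∑ w ∈ S.image φ, push S φ β w = ∑ v ∈ S, β v := by
  rw [sum_push, Finset.filter_true_of_mem fun v hv => Finset.mem_image_of_mem _ hv]

lemma cut_map {S : Finset V} {E : Finset ι} {g : ι → V × V} (hw : Wf S E g) (φ : V → V)
    (B : Finset V) {e : ι} (he : e ∈ E) :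
    cut (mapE g φ e) B = cut (g e) (S.filter (fun v => φ v ∈ B)) := by
  obtain ⟨h1, h2, -⟩ := hw e he
  simp only [cut, mapE, Finset.mem_filter, h1, h2, true_and]
  congr

lemma deg_quo {S : Finset V} {E : Finset ι} {g : ι → V × V} (hw : Wf S E g) (φ : V → V)
    (B : Finset V) :
    deg (quoE E g φ) (mapE g φ) B = deg E g (S.filter (fun v => φ v ∈ B)) := by
  unfold deg quoE
  rw [Finset.sum_filter]
  refine Finset.sum_congr rfl fun e he => ?_
  rw [← cut_map hw φ B he]
  split_ifs with h
  · rfl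
  · push Not at h; simp [cut, mapE, h]

lemma net_quo {S : Finset V} {E : Finset ι} {g : ι → V × V} (hw : Wf S E g) (φ : V → V)
    (x : ι → ZMod 3) (w : V) :
    net (quoE E g φ) (mapE g φ) x w = push S φ (net E g x) w := by
  unfold push
  rw [sum_net]
  unfold net quoE
  rw [Finset.sum_filter]
  refine Finset.sum_congr rfl fun e he => ?_
  obtain ⟨h1, h2, -⟩ := hw e he
  split_ifs with h
  · simp only [inc, incS, mapE, Finset.mem_filter, h1, h2, true_and]
    congr
  · push Not at h; simp [incS, h1, h2, h]

lemma push_con_of_notMem {S A : Finset V} {a : V} (ha : a ∈ A) (β : V → ZMod 3)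
    {v : V} (hv : v ∈ S) (hvA : v ∉ A) : push S (con A a) β v = β v := by
  unfold push
  have : S.filter (fun u => con A a u = v) = {v} := by
    ext u
    rw [Finset.mem_filter, Finset.mem_singleton]
    unfold con
    constructor
    · rintro ⟨-, h⟩
      split_ifs at h with h1
      · subst h; exact absurd ha hvA
      · exact h
    · rintro rfl; exact ⟨hv, by simp [hvA]⟩
  rw [this, Finset.sum_singleton]

lemma push_con_self {S A : Finset V} {a : V} (hA : A ⊆ S) (ha : a ∈ A) (β : V → ZMod 3) :
    push S (con A a) β a = ∑ v ∈ A, β v := by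
  unfold push
  congr 1
  ext u
  rw [Finset.mem_filter]
  unfold con
  constructor
  · rintro ⟨-, h⟩
    split_ifs at h with h1
    · exact h1
    · subst h; exact ha
  · intro h; exact ⟨hA h, by simp [h]⟩

/-- A flow of the contraction of `A` that also meets the demands inside `A` is a flow. -/
lemma sol_glue {S A : Finset V} {E : Finset ι} {g : ι → V × V} {β : V → ZMod 3} {a : V}
    {x : ι → ZMod 3} (hw : Wf S E g) (ha : a ∈ A) (hx : ∀ e ∈ E, x e ≠ 0)
    (h1 : Sol (S.image (con A a)) (quoE E g (con A a)) (mapE g (con A a)) (push S (con A a) β) x)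
    (h2 : ∀ v ∈ A, net E g x v = β v) : Sol S E g β x := by
  refine ⟨hx, fun v hv => ?_⟩
  by_cases hvA : v ∈ A
  · exact h2 v hvA
  · have := h1.2 v (Finset.mem_image.2 ⟨v, hv, by simp [con, hvA]⟩)
    rwa [net_quo hw, push_con_of_notMem ha _ hv hvA, push_con_of_notMem ha _ hv hvA] at this

/-- Every residue is the outflow at `v` of some nowhere-zero assignment to a set of edges
containing two edges at `v`. -/
lemma exists_net_eq {F : Finset ι} {g : ι → V × V} {v : V} {e e' : ι} (he : e ∈ F) (he' : e' ∈ F)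
    (hne : e ≠ e') (h : inc (g e) v ≠ 0) (h' : inc (g e') v ≠ 0) (y : ι → ZMod 3)
    (hy : ∀ i ∈ F, y i ≠ 0) (r : ZMod 3) :
    ∃ x : ι → ZMod 3, (∀ i ∈ F, x i ≠ 0) ∧ net F g x v = r ∧ ∀ i, i ≠ e → i ≠ e' → x i = y i := by
  have key : ∀ p q r : ZMod 3, p ≠ 0 → q ≠ 0 → ∃ s t : ZMod 3, s ≠ 0 ∧ t ≠ 0 ∧
      s * p + t * q = r := by decide
  obtain ⟨s, t, hs, ht, hst⟩ := key _ _ (r - ∑ i ∈ (F.erase e).erase e', y i * inc (g i) v) h h'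
  refine ⟨fun i => if i = e then s else if i = e' then t else y i, fun i hi => ?_, ?_, ?_⟩
  · simp only; split_ifs <;> first | assumption | exact hy i hi
  · unfold net
    rw [← Finset.add_sum_erase _ _ he,
      ← Finset.add_sum_erase _ _ (Finset.mem_erase.2 ⟨hne.symm, he'⟩)]
    have : ∑ i ∈ (F.erase e).erase e',
        (if i = e then s else if i = e' then t else y i) * inc (g i) v
        = ∑ i ∈ (F.erase e).erase e', y i * inc (g i) v := by
      refine Finset.sum_congr rfl fun i hi => ?_
      simp only [Finset.mem_erase] at hi
      simp [hi.1, hi.2.1]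
    rw [this]
    simp only [if_true, if_neg hne.symm]
    rw [← add_assoc, hst]; ring
  · intro i h1 h2; simp [h1, h2]

/-- Fixing the flow on a set `F` of edges and deleting them. -/
lemma sol_fix {S : Finset V} {E F : Finset ι} {g : ι → V × V} {β : V → ZMod 3}
    {x y : ι → ZMod 3} (hF : F ⊆ E) (hy : ∀ e ∈ F, y e ≠ 0)
    (h : Sol S (E \ F) g (fun v => β v - net F g y v) x) :
    Sol S E g β (fun e => if e ∈ F then y e else x e) := by
  refine ⟨fun e he => ?_, fun v hv => ?_⟩
  · simp only; split_ifs with h1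
    · exact hy e h1
    · exact h.1 e (Finset.mem_sdiff.2 ⟨he, h1⟩)
  · have h1 := h.2 v hv
    unfold net at h1 ⊢
    rw [← Finset.sum_sdiff hF]
    have h2 : ∑ e ∈ E \ F, (if e ∈ F then y e else x e) * inc (g e) v
        = ∑ e ∈ E \ F, x e * inc (g e) v :=
      Finset.sum_congr rfl fun e he => by rw [if_neg (Finset.mem_sdiff.1 he).2]
    have h3 : ∑ e ∈ F, (if e ∈ F then y e else x e) * inc (g e) v
        = ∑ e ∈ F, y e * inc (g e) v :=
      Finset.sum_congr rfl fun e he => by rw [if_pos he]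
    rw [h2, h3, h1]; ring

/-- The end of the edge `p` other than `v`. -/
def oth (p : V × V) (v : V) : V := if p.1 = v then p.2 else p.1

lemma oth_eq {p : V × V} {v : V} (h : At p v) : p = (v, oth p v) ∨ p = (oth p v, v) := by
  obtain ⟨a, b⟩ := p
  unfold At at h; unfold oth
  simp only at h ⊢
  by_cases h1 : a = v
  · left; simp [h1]
  · right; simp [h1, h.resolve_left h1]

/-- Lifting: if `e`, `e'` join `v` to `u`, `u'`, a flow of the multigraph where `e` is replaced
by an edge `uu'` and `e'` is deleted gives a flow of the original one. -/
lemma sol_lift {S : Finset V} {E : Finset ι} {g : ι → V × V} {β : V → ZMod 3}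
    {x : ι → ZMod 3} {e e' : ι} {v : V} (he : e ∈ E) (he' : e' ∈ E) (hne : e ≠ e')
    (hv : At (g e) v) (hv' : At (g e') v) (hu : oth (g e) v ≠ v) (hu' : oth (g e') v ≠ v)
    (h : Sol S (E.erase e') (Function.update g e (oth (g e) v, oth (g e') v)) β x) :
    ∃ y, Sol S E g β y ∧ (∀ i, i ≠ e → i ≠ e' → y i = x i) ∧
      y e = x e * inc (g e) (oth (g e) v) := by
  have hunit : ∀ p : V × V, At p v → oth p v ≠ v → inc p (oth p v) ≠ 0 := by
    intro p hp ho
    rcases oth_eq hp with h1 | h1 <;> generalize oth p v = u at * <;> subst h1 <;>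
      simp [inc, ho.symm]
  have hmem : e ∈ E.erase e' := Finset.mem_erase.2 ⟨hne, he⟩
  have hxe : x e ≠ 0 := h.1 e hmem
  refine ⟨fun i => if i = e then x e * inc (g e) (oth (g e) v) else
    if i = e' then - (x e * inc (g e') (oth (g e') v)) else x i, ⟨fun i hi => ?_, fun w hw => ?_⟩,
    fun i h1 h2 => by simp [h1, h2], by simp⟩
  · simp only
    split_ifs with h1 h2
    · exact mul_ne_zero hxe (hunit _ hv hu)
    · exact neg_ne_zero.2 (mul_ne_zero hxe (hunit _ hv' hu'))
    · exact h.1 i (Finset.mem_erase.2 ⟨h2, hi⟩)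
  · have h1 := h.2 w hw
    unfold net at h1 ⊢
    rw [← Finset.add_sum_erase _ _ hmem] at h1
    rw [← Finset.add_sum_erase _ _ he', ← Finset.add_sum_erase _ _ hmem, ← h1]
    have h2 : ∑ i ∈ (E.erase e').erase e, (if i = e then x e * inc (g e) (oth (g e) v) else
        if i = e' then - (x e * inc (g e') (oth (g e') v)) else x i) * inc (g i) w
        = ∑ i ∈ (E.erase e').erase e,
          x i * inc (Function.update g e (oth (g e) v, oth (g e') v) i) w := by
      refine Finset.sum_congr rfl fun i hi => ?_
      simp only [Finset.mem_erase] at hi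
      simp [hi.1, hi.2.1]
    rw [h2]
    simp only [if_true, if_neg hne.symm, Function.update_self]
    rw [← add_assoc]
    congr 1
    have key : inc (g e) (oth (g e) v) * inc (g e) w - inc (g e') (oth (g e') v) * inc (g e') w
        = inc (oth (g e) v, oth (g e') v) w := by
      have aux : ∀ p : V × V, At p v → oth p v ≠ v → inc p (oth p v) * inc p w
          = (if oth p v = w then 1 else 0) - (if v = w then 1 else 0) := by
        intro p hp ho
        rcases oth_eq hp with h1 | h1
        · generalize oth p v = u at *
          subst h1; simp [inc, ho.symm]
        · generalize oth p v = u at *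
          subst h1; simp [inc, ho.symm]
      rw [aux _ hv hu, aux _ hv' hu']
      simp [inc]
    rw [← key]; ring

/-! ### Flows with prescribed values around one vertex -/

/-- Degree condition for a vertex set with boundary sum `b` and cut size `d`. With
`τ ∈ {0, ±1, ±2, 3}` given by `τ ≡ b (mod 3)` and `τ ≡ d (mod 2)` it says `4 + |τ| ≤ d`. -/
def Good (b : ZMod 3) (d : ℕ) : Prop := 6 ≤ d ∨ (d = 5 ∧ b ≠ 0) ∨ (d = 4 ∧ b = 0)

/-- `Good` with slack: `6 + |τ| ≤ d` with `τ` as in `Good`. -/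
def Good2 (b : ZMod 3) (d : ℕ) : Prop := 8 ≤ d ∨ (d = 7 ∧ b ≠ 0) ∨ (d = 6 ∧ b = 0)

/-- Degree condition for the vertex whose edges have prescribed flow values:
`d ≤ 4 + |τ|` with `τ` as in `Good`. -/
def Low (b : ZMod 3) (d : ℕ) : Prop := d ≤ 5 ∨ (d = 6 ∧ b ≠ 0) ∨ (d = 7 ∧ b = 0)

/-- Hypotheses of the extension theorem of Lovász, Thomassen, Wu and Zhang: `D` prescribes the
flow on the edges at `z`. -/
structure Hyp (S : Finset V) (E : Finset ι) (g : ι → V × V) (β : V → ZMod 3) (z : V)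
    (D : ι → ZMod 3) : Prop where
  z_mem : z ∈ S
  wf : Wf S E g
  sum : ∑ v ∈ S, β v = 0
  nz : ∀ e ∈ E, D e ≠ 0
  net_z : net E g D z = β z
  low : Low (β z) (deg E g {z})
  good : ∀ A ⊆ S.erase z, A.Nonempty → A ≠ S.erase z → Good (∑ v ∈ A, β v) (deg E g A)

/-- The prescription `D` at `z` extends to a nowhere-zero flow. -/
def Ext (S : Finset V) (E : Finset ι) (g : ι → V × V) (β : V → ZMod 3) (z : V)
    (D : ι → ZMod 3) : Prop :=
  ∃ x, Sol S E g β x ∧ ∀ e ∈ E, At (g e) z → x e = D e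

lemma Sol.congr {S : Finset V} {E : Finset ι} {g : ι → V × V} {β : V → ZMod 3}
    {x y : ι → ZMod 3} (h : Sol S E g β x) (hxy : ∀ e ∈ E, x e = y e) : Sol S E g β y :=
  ⟨fun e he => hxy e he ▸ h.1 e he,
    fun v hv => (net_congr fun e he _ => (hxy e he).symm).trans (h.2 v hv)⟩

lemma Hyp.quo {S : Finset V} {E : Finset ι} {g : ι → V × V} {β : V → ZMod 3} {z : V}
    {D D' : ι → ZMod 3} (h : Hyp S E g β z D) {φ : V → V} (hφ : φ z = z)
    (nz' : ∀ e ∈ quoE E g φ, D' e ≠ 0)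
    (net' : net (quoE E g φ) (mapE g φ) D' z = push S φ β z)
    (low' : Low (push S φ β z) (deg (quoE E g φ) (mapE g φ) {z})) :
    Hyp (S.image φ) (quoE E g φ) (mapE g φ) (push S φ β) z D' where
  z_mem := Finset.mem_image.2 ⟨z, h.z_mem, hφ⟩
  wf := wf_quo h.wf φ
  sum := by rw [sum_push_image, h.sum]
  nz := nz'
  net_z := net'
  low := low'
  good := by
    intro A hA hne hne'
    have hzA : z ∉ A := fun hz => Finset.ne_of_mem_erase (hA hz) rfl
    rw [sum_push, deg_quo h.wf]
    refine h.good _ ?_ ?_ ?_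
    · intro v hv
      obtain ⟨hv1, hv2⟩ := Finset.mem_filter.1 hv
      refine Finset.mem_erase.2 ⟨?_, hv1⟩
      rintro rfl
      exact hzA (hφ ▸ hv2)
    · obtain ⟨w, hw⟩ := hne
      obtain ⟨v, hv, rfl⟩ := Finset.mem_image.1 (Finset.mem_of_mem_erase (hA hw))
      exact ⟨v, Finset.mem_filter.2 ⟨hv, hw⟩⟩
    · intro heq
      apply hne'
      refine Finset.Subset.antisymm hA fun w hw => ?_
      obtain ⟨hwz, hw⟩ := Finset.mem_erase.1 hw
      obtain ⟨v, hv, rfl⟩ := Finset.mem_image.1 hw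
      have : v ∈ S.erase z := Finset.mem_erase.2 ⟨by rintro rfl; exact hwz hφ, hv⟩
      rw [← heq] at this
      exact (Finset.mem_filter.1 this).2

lemma filter_con_of_notMem {S A : Finset V} {a v : V} (ha : a ∈ A) (hv : v ∈ S) (hvA : v ∉ A) :
    S.filter (fun u => con A a u ∈ ({v} : Finset V)) = {v} := by
  ext u
  rw [Finset.mem_filter, Finset.mem_singleton, Finset.mem_singleton]
  unfold con
  constructor
  · rintro ⟨-, h⟩
    split_ifs at h with h1
    · subst h; exact absurd ha hvA
    · exact h
  · rintro rfl; exact ⟨hv, by simp [hvA]⟩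

lemma filter_con_self {S A : Finset V} {a : V} (hA : A ⊆ S) (ha : a ∈ A) :
    S.filter (fun u => con A a u ∈ ({a} : Finset V)) = A := by
  ext u
  rw [Finset.mem_filter, Finset.mem_singleton]
  unfold con
  constructor
  · rintro ⟨-, h⟩
    split_ifs at h with h1
    · exact h1
    · subst h; exact ha
  · intro h; exact ⟨hA h, by simp [h]⟩

lemma card_con_lt {S A : Finset V} {a : V} (hA : A ⊆ S) (h2 : 2 ≤ A.card) :
    (S.image (con A a)).card < S.card := by
  have : S.image (con A a) ⊆ insert a (S \ A) := by
    intro w hw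
    obtain ⟨v, hv, rfl⟩ := Finset.mem_image.1 hw
    unfold con
    split_ifs with h
    · exact Finset.mem_insert_self _ _
    · exact Finset.mem_insert_of_mem (Finset.mem_sdiff.2 ⟨hv, h⟩)
  have h1 := Finset.card_le_card this
  have h3 := Finset.card_insert_le a (S \ A)
  have h4 := Finset.card_sdiff_add_card_eq_card hA
  omega

lemma at_mem_quo {S : Finset V} {E : Finset ι} {g : ι → V × V} (hw : Wf S E g) {A : Finset V}
    {a v : V} (ha : a ∈ A) (hv : v ∉ A) {e : ι} (he : e ∈ E) (h : At (g e) v) :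
    e ∈ quoE E g (con A a) ∧ At (mapE g (con A a) e) v := by
  obtain ⟨-, -, hne⟩ := hw e he
  have hav : a ≠ v := by rintro rfl; exact hv ha
  unfold quoE At mapE con
  rw [Finset.mem_filter]
  rcases h with h | h
  · subst h
    refine ⟨⟨he, ?_⟩, ?_⟩
    · simp only [hv, if_false]; split_ifs
      · exact hav.symm
      · exact hne
    · simp [hv]
  · subst h
    refine ⟨⟨he, ?_⟩, ?_⟩
    · simp only [hv, if_false]; split_ifs
      · exact hav
      · exact hne
    · simp [hv]

lemma notMem_quo_con {E : Finset ι} {g : ι → V × V} {A : Finset V} {a : V} {e : ι}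
    (h : e ∈ quoE E g (con A a)) : ¬ ((g e).1 ∈ A ∧ (g e).2 ∈ A) := by
  rintro ⟨h1, h2⟩
  exact (Finset.mem_filter.1 h).2 (by simp [con, h1, h2])

lemma inc_ne_zero_of_at {p : V × V} {v : V} (h : At p v) (hne : p.1 ≠ p.2) : inc p v ≠ 0 := by
  rcases h with h | h
  · subst h; simp [inc, hne.symm]
  · subst h; simp [inc, hne]

/-- Contraction of two parallel edges `e`, `e'` with ends `a`, `b`: the values on `e` and `e'`
can be chosen to meet the demand at `a`. -/
lemma sol_parallel {S : Finset V} {E : Finset ι} {g : ι → V × V} {β : V → ZMod 3}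
    {a b : V} {e e' : ι} (hw : Wf S E g) (he : e ∈ E) (he' : e' ∈ E) (hne : e ≠ e') (hab : a ≠ b)
    (hea : At (g e) a) (heb : At (g e) b) (hea' : At (g e') a) (heb' : At (g e') b)
    {x : ι → ZMod 3}
    (hx : Sol (S.image (con {a, b} a)) (quoE E g (con {a, b} a)) (mapE g (con {a, b} a))
      (push S (con {a, b} a) β) x) :
    ∃ y, Sol S E g β y ∧ ∀ i ∈ quoE E g (con {a, b} a), y i = x i := by
  have haA : a ∈ ({a, b} : Finset V) := by simp
  have haS : a ∈ S := by
    rcases hea with h | h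
    · rw [← h]; exact (hw e he).1
    · rw [← h]; exact (hw e he).2.1
  have hbS : b ∈ S := by
    rcases heb with h | h
    · rw [← h]; exact (hw e he).1
    · rw [← h]; exact (hw e he).2.1
  have hAS : ({a, b} : Finset V) ⊆ S := by
    intro u hu
    rcases Finset.mem_insert.1 hu with rfl | hu
    · exact haS
    · rw [Finset.mem_singleton.1 hu]; exact hbS
  have hends : ∀ p : V × V, At p a → At p b → p.1 ∈ ({a, b} : Finset V) ∧
      p.2 ∈ ({a, b} : Finset V) := by
    rintro ⟨p, q⟩ h1 h2
    unfold At at h1 h2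
    simp only [Finset.mem_insert, Finset.mem_singleton] at *
    rcases h1 with h1 | h1 <;> rcases h2 with h2 | h2
    · exact absurd (h1.symm.trans h2) hab
    · exact ⟨Or.inl h1, Or.inr h2⟩
    · exact ⟨Or.inr h2, Or.inl h1⟩
    · exact absurd (h1.symm.trans h2) hab
  obtain ⟨y, hy1, hy2, hy3⟩ := exists_net_eq he he' hne
    (inc_ne_zero_of_at hea (hw e he).2.2) (inc_ne_zero_of_at hea' (hw e' he').2.2)
    (fun i => if i ∈ quoE E g (con {a, b} a) then x i else 1)
    (fun i hi => by
      split_ifs with h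
      · exact hx.1 i h
      · exact one_ne_zero) (β a)
  have hyx : ∀ i ∈ quoE E g (con {a, b} a), y i = x i := by
    intro i hi
    rw [hy3 i]
    · simp [hi]
    · rintro rfl; exact notMem_quo_con hi (hends _ hea heb)
    · rintro rfl; exact notMem_quo_con hi (hends _ hea' heb')
  have hsol := hx.congr fun i hi => (hyx i hi).symm
  refine ⟨y, sol_glue hw haA hy1 hsol ?_, hyx⟩
  intro v hv
  rcases Finset.mem_insert.1 hv with rfl | hv
  · exact hy2
  · rw [Finset.mem_singleton.1 hv]
    have h1 := hsol.2 a (Finset.mem_image.2 ⟨a, haS, by simp [con]⟩)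
    rw [net_quo hw, push_con_self hAS haA, push_con_self hAS haA, Finset.sum_pair hab,
      Finset.sum_pair hab, hy2] at h1
    exact add_left_cancel h1

/-- A pair of parallel edges avoiding `z` is contracted. -/
lemma step_parallel {S : Finset V} {E : Finset ι} {g : ι → V × V} {β : V → ZMod 3} {z : V}
    {D : ι → ZMod 3} (h : Hyp S E g β z D)
    (ih : ∀ (S' : Finset V) (E' : Finset ι) (g' : ι → V × V) (β' : V → ZMod 3) (z' : V)
      (D' : ι → ZMod 3), S'.card < S.card → Hyp S' E' g' β' z' D' → Ext S' E' g' β' z' D')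
    {a b : V} {e e' : ι} (he : e ∈ E) (he' : e' ∈ E) (hne : e ≠ e') (hab : a ≠ b)
    (hea : At (g e) a) (heb : At (g e) b) (hea' : At (g e') a) (heb' : At (g e') b)
    (haz : a ≠ z) (hbz : b ≠ z) : Ext S E g β z D := by
  have haA : a ∈ ({a, b} : Finset V) := by simp
  have hzA : z ∉ ({a, b} : Finset V) := by simp [haz.symm, hbz.symm]
  have haS : a ∈ S := by
    rcases hea with h1 | h1
    · rw [← h1]; exact (h.wf e he).1
    · rw [← h1]; exact (h.wf e he).2.1
  have hbS : b ∈ S := by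
    rcases heb with h1 | h1
    · rw [← h1]; exact (h.wf e he).1
    · rw [← h1]; exact (h.wf e he).2.1
  have hAS : ({a, b} : Finset V) ⊆ S := by
    intro u hu
    rcases Finset.mem_insert.1 hu with rfl | hu
    · exact haS
    · rw [Finset.mem_singleton.1 hu]; exact hbS
  have hpush := fun γ => push_con_of_notMem (S := S) haA γ h.z_mem hzA
  obtain ⟨x, hx, hxD⟩ := ih _ _ _ _ z D (card_con_lt (a := a) hAS (by rw [Finset.card_pair hab]))
    (h.quo (φ := con {a, b} a) (by simp [con, haz.symm, hbz.symm])
      (fun i hi => h.nz i (Finset.mem_filter.1 hi).1)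
      (by rw [net_quo h.wf, hpush, hpush, h.net_z])
      (by rw [deg_quo h.wf, filter_con_of_notMem haA h.z_mem hzA, hpush]; exact h.low))
  obtain ⟨y, hy, hyx⟩ := sol_parallel h.wf he he' hne hab hea heb hea' heb' hx
  refine ⟨y, hy, fun i hi hiz => ?_⟩
  obtain ⟨h1, h2⟩ := at_mem_quo h.wf haA hzA hi hiz
  rw [hyx i h1, hxD i h1 h2]

lemma deg_compl {S A : Finset V} {E : Finset ι} {g : ι → V × V} (hw : Wf S E g) :
    deg E g (S \ A) = deg E g A := by
  unfold deg
  refine Finset.sum_congr rfl fun e he => ?_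
  obtain ⟨h1, h2, -⟩ := hw e he
  unfold cut
  simp only [Finset.mem_sdiff, h1, h2, true_and]
  by_cases h3 : (g e).1 ∈ A <;> by_cases h4 : (g e).2 ∈ A <;> simp [h3, h4]

lemma low_of_not_good2 {b : ZMod 3} {d : ℕ} (h : ¬ Good2 b d) : Low b d := by
  unfold Good2 Low at *
  by_cases hb : b = 0 <;> simp only [hb, ne_eq, not_true_eq_false, not_false_eq_true, and_true,
    and_false, or_false, false_or] at * <;> omega

/-- A vertex set whose degree condition has no slack splits the problem into two smaller ones. -/
lemma step_contract {S : Finset V} {E : Finset ι} {g : ι → V × V} {β : V → ZMod 3} {z : V}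
    {D : ι → ZMod 3} (h : Hyp S E g β z D)
    (ih : ∀ (S' : Finset V) (E' : Finset ι) (g' : ι → V × V) (β' : V → ZMod 3) (z' : V)
      (D' : ι → ZMod 3), S'.card < S.card → Hyp S' E' g' β' z' D' → Ext S' E' g' β' z' D')
    {A : Finset V} (hA : A ⊆ S.erase z) (h2 : 2 ≤ A.card) (hne : A ≠ S.erase z)
    (hbad : ¬ Good2 (∑ v ∈ A, β v) (deg E g A)) : Ext S E g β z D := by
  have hAS : A ⊆ S := hA.trans (Finset.erase_subset _ _)
  have hzA : z ∉ A := fun hz => Finset.ne_of_mem_erase (hA hz) rfl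
  obtain ⟨a, ha⟩ : A.Nonempty := Finset.card_pos.1 (by omega)
  have hpush := fun γ => push_con_of_notMem (S := S) ha γ h.z_mem hzA
  obtain ⟨x, hx, hxD⟩ := ih _ _ _ _ z D (card_con_lt (a := a) hAS h2)
    (h.quo (φ := con A a) (by simp [con, hzA])
      (fun i hi => h.nz i (Finset.mem_filter.1 hi).1)
      (by rw [net_quo h.wf, hpush, hpush, h.net_z])
      (by rw [deg_quo h.wf, filter_con_of_notMem ha h.z_mem hzA, hpush]; exact h.low))
  set C := S \ A with hC
  have hzC : z ∈ C := Finset.mem_sdiff.2 ⟨h.z_mem, hzA⟩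
  have hCS : C ⊆ S := Finset.sdiff_subset
  have hC2 : 2 ≤ C.card := by
    by_contra hlt
    apply hne
    refine Finset.Subset.antisymm hA fun v hv => ?_
    obtain ⟨hvz, hvS⟩ := Finset.mem_erase.1 hv
    by_contra hvA
    have : ({v, z} : Finset V) ⊆ C := by
      intro u hu
      rcases Finset.mem_insert.1 hu with rfl | hu
      · exact Finset.mem_sdiff.2 ⟨hvS, hvA⟩
      · rw [Finset.mem_singleton.1 hu]; exact hzC
    have := Finset.card_le_card this
    rw [Finset.card_pair hvz] at this
    omega
  set D₂ : ι → ZMod 3 := fun i => if i ∈ quoE E g (con A a) then x i else 1 with hD₂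
  have hD₂nz : ∀ i, D₂ i ≠ 0 := by
    intro i
    simp only [hD₂]; split_ifs with hi
    · exact hx.1 i hi
    · exact one_ne_zero
  have hxC : ∀ v ∈ C, net E g D₂ v = β v := by
    intro v hv
    obtain ⟨hvS, hvA⟩ := Finset.mem_sdiff.1 hv
    have h1 := hx.2 v (Finset.mem_image.2 ⟨v, hvS, by simp [con, hvA]⟩)
    rw [net_quo h.wf, push_con_of_notMem ha _ hvS hvA, push_con_of_notMem ha _ hvS hvA] at h1
    rw [← h1]
    exact net_congr fun i hi hiv => by
      simp only [hD₂, (at_mem_quo h.wf ha hvA hi hiv).1, if_true]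
  have hsumA : ∑ v ∈ C, β v = - ∑ v ∈ A, β v := by
    have := Finset.sum_sdiff (f := β) hAS
    rw [h.sum] at this
    exact eq_neg_of_add_eq_zero_left this
  have hlow : Low (∑ v ∈ C, β v) (deg E g C) := by
    rw [hC, deg_compl h.wf, ← hC, hsumA]
    have := low_of_not_good2 hbad
    unfold Low at *
    simpa using this
  obtain ⟨y, hy, hyD⟩ := ih _ _ _ _ z D₂ (card_con_lt (a := z) hCS hC2)
    (h.quo (φ := con C z) (by simp [con]) (fun i _ => hD₂nz i)
      (by
        rw [net_quo h.wf, push_con_self hCS hzC, push_con_self hCS hzC]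
        exact Finset.sum_congr rfl hxC)
      (by rw [deg_quo h.wf, filter_con_self hCS hzC, push_con_self hCS hzC]; exact hlow))
  -- an edge surviving both contractions joins `A` to its complement, where `y` follows `D₂`
  have hagree : ∀ i ∈ quoE E g (con A a), i ∈ quoE E g (con C z) → y i = x i := by
    intro i hi hi'
    obtain ⟨hiE, -⟩ := Finset.mem_filter.1 hi
    obtain ⟨h1, h2, -⟩ := h.wf i hiE
    rw [hyD i hi']
    · simp [hD₂, hi]
    · have h3 := notMem_quo_con hi
      unfold At mapE con
      by_cases h4 : (g i).1 ∈ A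
      · have h5 : (g i).2 ∈ C := Finset.mem_sdiff.2 ⟨h2, fun h5 => h3 ⟨h4, h5⟩⟩
        simp [h5]
      · have h5 : (g i).1 ∈ C := Finset.mem_sdiff.2 ⟨h1, h4⟩
        simp [h5]
  set w : ι → ZMod 3 := fun i => if i ∈ quoE E g (con A a) then x i else y i with hw
  have hwx : ∀ i ∈ quoE E g (con A a), x i = w i := by
    intro i hi; simp [hw, hi]
  have hwy : ∀ i ∈ quoE E g (con C z), y i = w i := by
    intro i hi
    simp only [hw]; split_ifs with h1
    · exact hagree i h1 hi
    · rfl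
  refine ⟨w, sol_glue h.wf ha ?_ (hx.congr hwx) ?_, ?_⟩
  · intro i hi
    simp only [hw]; split_ifs with h1
    · exact hx.1 i h1
    · obtain ⟨h3, h4, h5⟩ := h.wf i hi
      have h6 : (g i).1 ∈ A := by
        by_contra h6
        exact h1 (at_mem_quo h.wf ha h6 hi (Or.inl rfl)).1
      have h7 : (g i).1 ∉ C := fun h7 => (Finset.mem_sdiff.1 h7).2 h6
      exact hy.1 i (at_mem_quo h.wf hzC h7 hi (Or.inl rfl)).1
  · intro v hv
    have hvC : v ∉ C := fun h7 => (Finset.mem_sdiff.1 h7).2 hv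
    have h1 := (hy.congr hwy).2 v (Finset.mem_image.2 ⟨v, hAS hv, by simp [con, hvC]⟩)
    rwa [net_quo h.wf, push_con_of_notMem hzC _ (hAS hv) hvC,
      push_con_of_notMem hzC _ (hAS hv) hvC] at h1
  · intro i hi hiz
    obtain ⟨h1, h2⟩ := at_mem_quo h.wf ha hzA hi hiz
    rw [← hwx i h1, hxD i h1 h2]

/-! ### Deleting and lifting edges around the prescribed vertex -/

lemma cut_singleton {p : V × V} (hne : p.1 ≠ p.2) (v : V) :
    cut p {v} = if At p v then 1 else 0 := by
  unfold cut At
  simp only [Finset.mem_singleton]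
  by_cases h1 : p.1 = v <;> by_cases h2 : p.2 = v
  · exact absurd (h1.trans h2.symm) hne
  all_goals simp [h1, h2]

lemma deg_singleton {S : Finset V} {E : Finset ι} {g : ι → V × V} (hw : Wf S E g) (v : V) :
    deg E g {v} = (E.filter (fun e => At (g e) v)).card := by
  unfold deg
  rw [Finset.card_filter]
  exact Finset.sum_congr rfl fun e he => cut_singleton (hw e he).2.2 v

lemma deg_erase {E : Finset ι} {e : ι} (he : e ∈ E) (g : ι → V × V) (A : Finset V) :
    cut (g e) A + deg (E.erase e) g A = deg E g A :=
  Finset.add_sum_erase E (fun e => cut (g e) A) he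

lemma deg_update {E : Finset ι} {e : ι} (he : e ∈ E) (g : ι → V × V) (p : V × V) (A : Finset V) :
    cut (g e) A + deg E (Function.update g e p) A = cut p A + deg E g A := by
  rw [← deg_erase he, ← deg_erase he, Function.update_self]
  have : deg (E.erase e) (Function.update g e p) A = deg (E.erase e) g A :=
    Finset.sum_congr rfl fun i hi => by rw [Function.update_of_ne (Finset.ne_of_mem_erase hi)]
  omega

lemma net_erase {E : Finset ι} {e : ι} (he : e ∈ E) (g : ι → V × V) (x : ι → ZMod 3) (v : V) :
    x e * inc (g e) v + net (E.erase e) g x v = net E g x v :=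
  Finset.add_sum_erase E (fun e => x e * inc (g e) v) he

lemma net_congr' {E : Finset ι} {g g' : ι → V × V} {x y : ι → ZMod 3} (v : V)
    (h : ∀ e ∈ E, g e = g' e ∧ x e = y e) : net E g x v = net E g' y v :=
  Finset.sum_congr rfl fun e he => by rw [(h e he).1, (h e he).2]

lemma net_eq_zero_of_isolated {E : Finset ι} {g : ι → V × V} {v : V}
    (h : ∀ e ∈ E, ¬ At (g e) v) (x : ι → ZMod 3) : net E g x v = 0 :=
  Finset.sum_eq_zero fun e he => by rw [inc_of_not_at (h e he), mul_zero]

lemma sol_isolated {S : Finset V} {E : Finset ι} {g : ι → V × V} {β : V → ZMod 3}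
    {x : ι → ZMod 3} {v : V} (h : ∀ e ∈ E, ¬ At (g e) v) (hβ : β v = 0)
    (hx : Sol (S.erase v) E g β x) : Sol S E g β x := by
  refine ⟨hx.1, fun w hw => ?_⟩
  by_cases hwv : w = v
  · subst hwv; rw [hβ, net_eq_zero_of_isolated h]
  · exact hx.2 w (Finset.mem_erase.2 ⟨hwv, hw⟩)

lemma wf_erase {S : Finset V} {E : Finset ι} {g : ι → V × V} {v : V} (hw : Wf S E g)
    (h : ∀ e ∈ E, ¬ At (g e) v) : Wf (S.erase v) E g := by
  intro e he
  obtain ⟨h1, h2, h3⟩ := hw e he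
  have h4 := h e he
  unfold At at h4; push Not at h4
  exact ⟨Finset.mem_erase.2 ⟨h4.1, h1⟩, Finset.mem_erase.2 ⟨h4.2, h2⟩, h3⟩

lemma at_oth (p : V × V) (v : V) : At p (oth p v) := by
  unfold At oth; split_ifs <;> simp

lemma oth_ne {p : V × V} {v : V} (hne : p.1 ≠ p.2) : oth p v ≠ v := by
  unfold oth; split_ifs with h
  · rw [← h]; exact hne.symm
  · exact h

lemma oth_mem {S : Finset V} {p : V × V} {v : V} (h1 : p.1 ∈ S) (h2 : p.2 ∈ S) :
    oth p v ∈ S := by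
  unfold oth; split_ifs <;> assumption

lemma at_mem {S : Finset V} {p : V × V} {v : V} (h1 : p.1 ∈ S) (h2 : p.2 ∈ S) (h : At p v) :
    v ∈ S := by
  rcases h with h | h <;> subst h <;> assumption

lemma at_iff {p : V × V} {v w : V} (h : At p v) : At p w ↔ w = v ∨ w = oth p v := by
  rcases oth_eq h with h1 | h1 <;> generalize oth p v = u at * <;> subst h1 <;>
    simp [At, eq_comm, or_comm]

lemma inc_oth {p : V × V} {v : V} (h : At p v) (hne : p.1 ≠ p.2) :
    inc p (oth p v) = - inc p v := by
  have h0 := oth_ne (v := v) hne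
  rcases oth_eq h with h1 | h1 <;> generalize oth p v = u at * <;> subst h1 <;>
    simp [inc, h0, h0.symm]

lemma inc_sq {p : V × V} {v : V} (h : At p v) (hne : p.1 ≠ p.2) : inc p v * inc p v = 1 := by
  rcases h with h | h
  · subst h; simp [inc, hne.symm]
  · subst h; simp [inc, hne]

lemma cut_insert {p : V × V} (hne : p.1 ≠ p.2) {v : V} {A : Finset V} (hv : v ∉ A) :
    cut p (insert v A) + 2 * (if At p v ∧ oth p v ∈ A then 1 else 0) = cut p {v} + cut p A := by
  obtain ⟨a, b⟩ := p
  simp only at hne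
  unfold cut At oth
  simp only [Finset.mem_insert, Finset.mem_singleton]
  by_cases h1 : a = v <;> by_cases h2 : b = v
  · exact absurd (h1.trans h2.symm) hne
  · subst h1; by_cases h3 : b ∈ A <;> simp [h2, hv, h3]
  · subst h2; by_cases h3 : a ∈ A <;> simp [h1, hv, h3]
  · simp [h1, h2]

lemma deg_insert {S : Finset V} {E : Finset ι} {g : ι → V × V} (hw : Wf S E g) {v : V}
    {A : Finset V} (hv : v ∉ A) :
    deg E g (insert v A) + 2 * (E.filter (fun e => At (g e) v ∧ oth (g e) v ∈ A)).card
      = deg E g {v} + deg E g A := by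
  unfold deg
  rw [Finset.card_filter, Finset.mul_sum, ← Finset.sum_add_distrib, ← Finset.sum_add_distrib]
  exact Finset.sum_congr rfl fun e he => cut_insert (hw e he).2.2 hv

lemma good_of_good2_sub_two {b : ZMod 3} {d : ℕ} (h : Good2 b (d + 2)) : Good b d := by
  unfold Good Good2 at *
  rcases h with h | ⟨h, hb⟩ | ⟨h, hb⟩
  · left; omega
  · right; left; exact ⟨by omega, hb⟩
  · right; right; exact ⟨by omega, hb⟩

lemma good_of_good2_sub_one {b r : ZMod 3} {d : ℕ} (hr : r ≠ 0) (h : Good2 b (1 + d)) :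
    Good (b - r) d := by
  unfold Good Good2 at *
  rcases h with h | ⟨h, -⟩ | ⟨h, hb⟩
  · left; omega
  · left; omega
  · right; left; subst hb; exact ⟨by omega, by simpa using hr⟩

lemma Good2.good {b r : ZMod 3} {d : ℕ} (h : Good2 b d) : Good r d := by
  unfold Good Good2 at *; omega

lemma low_sub_one {b r : ZMod 3} {d : ℕ} (hr : r ≠ 0) (h : Low b (1 + d)) :
    Low (b - r) d := by
  unfold Low at *
  rcases h with h | ⟨h, -⟩ | ⟨h, hb⟩
  · left; omega
  · left; omega
  · right; left; subst hb; exact ⟨by omega, by simpa using hr⟩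

/-- The number of edges not at `z`. -/
def off (E : Finset ι) (g : ι → V × V) (z : V) : ℕ := (E.filter (fun e => ¬ At (g e) z)).card

lemma two_le_card_of_ne {A : Finset V} {v : V} (hv : v ∈ A) (h : A ≠ {v}) : 2 ≤ A.card := by
  by_contra hlt
  have := Finset.card_pos.2 ⟨v, hv⟩
  obtain ⟨w, rfl⟩ := Finset.card_eq_one.1 (show A.card = 1 by omega)
  rw [Finset.mem_singleton] at hv; subst hv; exact h rfl

/-- Deleting an edge after fixing its flow value to be `t`. -/
lemma step_delete {S : Finset V} {E : Finset ι} {g : ι → V × V} {β : V → ZMod 3} {z : V}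
    {D : ι → ZMod 3} (h : Hyp S E g β z D)
    (ih : ∀ (E' : Finset ι) (g' : ι → V × V) (β' : V → ZMod 3) (D' : ι → ZMod 3),
      off E' g' z + E'.card < off E g z + E.card → Hyp S E' g' β' z D' → Ext S E' g' β' z D')
    (hbig : ∀ A ⊆ S.erase z, 2 ≤ A.card → A ≠ S.erase z → Good2 (∑ v ∈ A, β v) (deg E g A))
    {e : ι} (he : e ∈ E) {t : ZMod 3} (ht : t ≠ 0) (htz : At (g e) z → t = D e)
    (hends : ∀ v, At (g e) v → v ≠ z → Good (β v - t * inc (g e) v) (deg E g {v} - 1)) :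
    Ext S E g β z D := by
  have hne := (h.wf e he).2.2
  have hsum : ∀ A : Finset V, ∑ v ∈ A, (β v - t * inc (g e) v)
      = ∑ v ∈ A, β v - t * incS (g e) A := by
    intro A; rw [Finset.sum_sub_distrib, ← Finset.mul_sum, sum_inc]
  have hnet : ∀ v, net {e} g (fun _ => t) v = t * inc (g e) v := fun v => by simp [net]
  obtain ⟨x, hx, hxD⟩ := ih (E.erase e) g (fun v => β v - t * inc (g e) v) D (by
      have h1 := Finset.card_erase_lt_of_mem he
      have h2 : off (E.erase e) g z ≤ off E g z :=
        Finset.card_le_card (Finset.filter_subset_filter _ (Finset.erase_subset _ _))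
      omega)
    { z_mem := h.z_mem
      wf := fun i hi => h.wf i (Finset.mem_of_mem_erase hi)
      sum := by
        rw [hsum, h.sum]
        obtain ⟨h1, h2, -⟩ := h.wf e he
        simp [incS, h1, h2]
      nz := fun i hi => h.nz i (Finset.mem_of_mem_erase hi)
      net_z := by
        rw [← h.net_z, ← net_erase he]
        by_cases hez : At (g e) z
        · rw [htz hez]; ring
        · rw [inc_of_not_at hez]; ring
      low := by
        have h1 := deg_erase he g {z}
        have h2 := h.low
        rw [cut_singleton hne] at h1
        rw [← h1] at h2
        split_ifs at h1 h2 with hez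
        · exact low_sub_one (mul_ne_zero ht (inc_ne_zero_of_at hez hne)) h2
        · rw [inc_of_not_at hez]; simpa using h2
      good := by
        intro A hA hA1 hA2
        rw [hsum]
        have h1 := deg_erase he g A
        rcases cut_eq (g e) A with hc | hc
        · rw [incS_of_cut_eq_zero hc]
          rw [hc, zero_add] at h1
          rw [h1, mul_zero, sub_zero]
          exact h.good A hA hA1 hA2
        · by_cases hA3 : ∃ v, A = {v}
          · obtain ⟨v, rfl⟩ := hA3
            have hv : At (g e) v := by
              rw [cut_singleton hne] at hc
              by_contra h3; simp [h3] at hc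
            have hvz : v ≠ z := Finset.ne_of_mem_erase (hA (Finset.mem_singleton_self v))
            have h3 := hends v hv hvz
            rw [← h1, hc, Nat.add_sub_cancel_left] at h3
            rwa [← sum_inc, Finset.sum_singleton, Finset.sum_singleton]
          · obtain ⟨v, hv⟩ := hA1
            have h3 := hbig A hA (two_le_card_of_ne hv fun h4 => hA3 ⟨v, h4⟩) hA2
            rw [← h1, hc] at h3
            exact good_of_good2_sub_one
              (mul_ne_zero ht (incS_of_cut_ne_zero (by omega))) h3 }
  refine ⟨_, sol_fix (F := {e}) (y := fun _ => t) (by simpa using he) (fun _ _ => ht) (x := x)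
    ?_, ?_⟩
  · rw [Finset.sdiff_singleton_eq_erase]
    exact ⟨hx.1, fun v hv => by beta_reduce; rw [hnet]; exact hx.2 v hv⟩
  · intro i hi hiz
    by_cases hie : i = e
    · subst hie; simpa using htz hiz
    · simpa [hie] using hxD i (Finset.mem_erase.2 ⟨hie, hi⟩) hiz

/-- If no edge is at `z`, a vertex whose degree condition has no slack can take its place. -/
lemma step_isolated {S : Finset V} {E : Finset ι} {g : ι → V × V} {β : V → ZMod 3} {z : V}
    {D : ι → ZMod 3} (h : Hyp S E g β z D)
    (ih : ∀ (S' : Finset V) (E' : Finset ι) (g' : ι → V × V) (β' : V → ZMod 3) (z' : V)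
      (D' : ι → ZMod 3), S'.card < S.card → Hyp S' E' g' β' z' D' → Ext S' E' g' β' z' D')
    (hcard : 3 ≤ S.card) (hz : ∀ e ∈ E, ¬ At (g e) z) {a : V} (ha : a ∈ S.erase z)
    (hbad : ¬ Good2 (β a) (deg E g {a})) : Ext S E g β z D := by
  have hβz : β z = 0 := by rw [← h.net_z, net_eq_zero_of_isolated hz]
  have hne : ({a} : Finset V) ≠ S.erase z := by
    intro h1
    have := Finset.card_erase_of_mem h.z_mem
    rw [← h1, Finset.card_singleton] at this
    omega
  have hg := h.good {a} (by simpa using ha) (Finset.singleton_nonempty a) hne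
  have hd : 2 ≤ (E.filter (fun e => At (g e) a)).card := by
    rw [← deg_singleton h.wf]; unfold Good at hg; omega
  obtain ⟨e, he, e', he', hee⟩ := Finset.one_lt_card.1 hd
  rw [Finset.mem_filter] at he he'
  obtain ⟨D', hD1, hD2, -⟩ := exists_net_eq he.1 he'.1 hee
    (inc_ne_zero_of_at he.2 (h.wf e he.1).2.2) (inc_ne_zero_of_at he'.2 (h.wf e' he'.1).2.2)
    D h.nz (β a)
  obtain ⟨x, hx, -⟩ := ih (S.erase z) E g β a D' (Finset.card_erase_lt_of_mem h.z_mem)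
    { z_mem := ha
      wf := wf_erase h.wf hz
      sum := by
        have := h.sum
        rwa [← Finset.add_sum_erase _ _ h.z_mem, hβz, zero_add] at this
      nz := hD1
      net_z := hD2
      low := low_of_not_good2 hbad
      good := by
        intro A hA hA1 _
        refine h.good A (hA.trans (Finset.erase_subset _ _)) hA1 ?_
        rintro rfl
        exact Finset.ne_of_mem_erase (hA ha) rfl }
  exact ⟨x, sol_isolated hz hβz hx, fun e he hez => absurd hez (hz e he)⟩

/-! ### Lifting pairs of edges -/

lemma deg_lift {E : Finset ι} {g : ι → V × V} {e e' : ι} {v : V} {A : Finset V} (he : e ∈ E)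
    (he' : e' ∈ E) (hne : e ≠ e') (hv : At (g e) v) (hv' : At (g e') v) (hA : v ∉ A) :
    deg (E.erase e') (Function.update g e (oth (g e) v, oth (g e') v)) A
      + 2 * (if oth (g e) v ∈ A ∧ oth (g e') v ∈ A then 1 else 0) = deg E g A := by
  have h1 := deg_update (Finset.mem_erase.2 ⟨hne, he⟩) g (oth (g e) v, oth (g e') v) A
  have h2 := deg_erase he' g A
  have h3 : ∀ p : V × V, At p v → cut p A = if oth p v ∈ A then 1 else 0 := by
    intro p hp
    rcases oth_eq hp with h1 | h1 <;> generalize oth p v = u at * <;> subst h1 <;>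
      by_cases hu : u ∈ A <;> simp [cut, hu, hA]
  rw [h3 _ hv] at h1
  rw [h3 _ hv'] at h2
  have h4 : cut (oth (g e) v, oth (g e') v) A
      + 2 * (if oth (g e) v ∈ A ∧ oth (g e') v ∈ A then 1 else 0)
      = (if oth (g e) v ∈ A then 1 else 0) + (if oth (g e') v ∈ A then 1 else 0) := by
    unfold cut
    by_cases h5 : oth (g e) v ∈ A <;> by_cases h6 : oth (g e') v ∈ A <;> simp [h5, h6]
  omega

lemma net_lift {E : Finset ι} {g : ι → V × V} {D : ι → ZMod 3} {e e' : ι} {v z : V} (he : e ∈ E)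
    (he' : e' ∈ E) (hne : e ≠ e') (hv : At (g e) v)
    (hvz : v ≠ z) (hz : ¬ At (g e') z) :
    net (E.erase e') (Function.update g e (oth (g e) v, oth (g e') v))
      (Function.update D e (D e * inc (g e) (oth (g e) v))) z = net E g D z := by
  have hee := Finset.mem_erase.2 ⟨hne, he⟩
  rw [← net_erase he' g D, ← net_erase hee g D, ← net_erase hee, inc_of_not_at hz,
    net_congr' (g := Function.update g e (oth (g e) v, oth (g e') v)) (g' := g) (y := D) z]
  · rw [Function.update_self, Function.update_self]
    have h1 : oth (g e') v ≠ z := by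
      intro h; exact hz (h ▸ at_oth (g e') v)
    have h2 : inc (g e) (oth (g e) v) * inc (oth (g e) v, oth (g e') v) z = inc (g e) z := by
      by_cases h3 : oth (g e) v = z
      · rw [h3]; simp [inc, h1]
      · have : ¬ At (g e) z := by
          rw [at_iff hv]; rintro (h | h)
          · exact hvz h.symm
          · exact h3 h.symm
        rw [inc_of_not_at this]; simp [inc, h1, h3]
    rw [mul_assoc, h2]; ring
  · intro i hi
    have := Finset.ne_of_mem_erase hi
    rw [Function.update_of_ne this, Function.update_of_ne this]
    exact ⟨rfl, rfl⟩

/-- A vertex `a` of degree `4` with zero demand is removed by lifting its edges in two pairs. -/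
lemma step_lift {S : Finset V} {E : Finset ι} {g : ι → V × V} {β : V → ZMod 3} {z : V}
    {D : ι → ZMod 3} (h : Hyp S E g β z D)
    (ih : ∀ (S' : Finset V) (E' : Finset ι) (g' : ι → V × V) (β' : V → ZMod 3) (z' : V)
      (D' : ι → ZMod 3), S'.card < S.card → Hyp S' E' g' β' z' D' → Ext S' E' g' β' z' D')
    (hbig : ∀ A ⊆ S.erase z, 2 ≤ A.card → A ≠ S.erase z → Good2 (∑ v ∈ A, β v) (deg E g A))
    (hpar : ∀ e ∈ E, ∀ e' ∈ E, e ≠ e' → ∀ a b, a ≠ b → a ≠ z → b ≠ z → At (g e) a → At (g e) b →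
      At (g e') a → At (g e') b → False)
    (hcard : 3 ≤ S.card) {a : V} (ha : a ∈ S.erase z)
    (hd : deg E g {a} = 4) (hβ : β a = 0) : Ext S E g β z D := by
  obtain ⟨haz, haS⟩ := Finset.mem_erase.1 ha
  -- at most two of the edges at `a` go to `z`
  have hk : (E.filter (fun e => At (g e) a ∧ oth (g e) a ∈ ({z} : Finset V))).card ≤ 2 := by
    have h1 := deg_insert h.wf (v := a) (A := {z}) (by simpa using haz)
    have hsub : ({a, z} : Finset V) ⊆ S := by
      intro u hu
      rcases Finset.mem_insert.1 hu with rfl | hu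
      · exact haS
      · rw [Finset.mem_singleton.1 hu]; exact h.z_mem
    have h2 : ((S \ {a, z}).card) + 2 = S.card := by
      rw [← Finset.card_sdiff_add_card_eq_card hsub, Finset.card_pair haz]
    have h3 := h.good (S \ {a, z}) (by
        intro u hu
        obtain ⟨h4, h5⟩ := Finset.mem_sdiff.1 hu
        refine Finset.mem_erase.2 ⟨?_, h4⟩
        rintro rfl; exact h5 (by simp)) (Finset.card_pos.1 (by omega)) (by
        intro h4
        rw [← h4] at ha
        exact (Finset.mem_sdiff.1 ha).2 (by simp))
    have h5 : ∑ v ∈ S \ {a, z}, β v = - β z := by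
      have h6 := Finset.sum_sdiff (f := β) hsub
      rw [Finset.sum_pair haz, hβ, zero_add, h.sum] at h6
      exact eq_neg_of_add_eq_zero_left h6
    rw [deg_compl h.wf, h5] at h3
    have h6 := h.low
    rw [hd] at h1
    unfold Good Low at *
    by_cases hb : β z = 0
    · simp only [hb, neg_zero, ne_eq, not_true_eq_false, and_false, and_true,
        false_or] at h3 h6
      omega
    · simp only [neg_eq_zero, hb, ne_eq, not_false_eq_true, and_false, and_true,
        or_false] at h3 h6
      omega
  -- `e₂`, `e₄` do not go to `z`, and `e₁`, `e₃` are the other two edges at `a`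
  set F := E.filter (fun e => At (g e) a) with hF
  have hF4 : F.card = 4 := by rw [hF, ← deg_singleton h.wf, hd]
  have hF2 : 2 ≤ (F.filter (fun e => ¬ oth (g e) a ∈ ({z} : Finset V))).card := by
    have h1 := Finset.card_filter_add_card_filter_not (s := F)
      (fun e => oth (g e) a ∈ ({z} : Finset V))
    rw [hF, Finset.filter_filter, ← hF] at h1
    omega
  obtain ⟨e₂, he2, e₄, he4, h24⟩ := Finset.one_lt_card.1 hF2
  obtain ⟨he2F, hz2⟩ := Finset.mem_filter.1 he2
  obtain ⟨he4F, hz4⟩ := Finset.mem_filter.1 he4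
  rw [Finset.mem_singleton] at hz2 hz4
  have hF' : ((F.erase e₂).erase e₄).card = 2 := by
    rw [Finset.card_erase_of_mem (Finset.mem_erase.2 ⟨h24.symm, he4F⟩),
      Finset.card_erase_of_mem he2F, hF4]
  obtain ⟨e₁, e₃, h13, hF13⟩ := Finset.card_eq_two.1 hF'
  have he1' : e₁ ∈ (F.erase e₂).erase e₄ := by rw [hF13]; simp
  have he3' : e₃ ∈ (F.erase e₂).erase e₄ := by rw [hF13]; simp
  rw [Finset.mem_erase, Finset.mem_erase] at he1' he3'
  obtain ⟨h14, h12, he1F⟩ := he1'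
  obtain ⟨h34, h32, he3F⟩ := he3'
  have hFall : ∀ i ∈ F, i = e₁ ∨ i = e₂ ∨ i = e₃ ∨ i = e₄ := by
    intro i hi
    by_contra hcon
    push Not at hcon
    have : i ∈ (F.erase e₂).erase e₄ :=
      Finset.mem_erase.2 ⟨hcon.2.2.2, Finset.mem_erase.2 ⟨hcon.2.1, hi⟩⟩
    rw [hF13] at this
    simp [hcon.1, hcon.2.2.1] at this
  obtain ⟨he1, ha1⟩ := Finset.mem_filter.1 he1F
  obtain ⟨he2, ha2⟩ := Finset.mem_filter.1 he2F
  obtain ⟨he3, ha3⟩ := Finset.mem_filter.1 he3F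
  obtain ⟨he4, ha4⟩ := Finset.mem_filter.1 he4F
  have hdist : ∀ e ∈ E, ∀ e' ∈ E, e ≠ e' → At (g e) a → At (g e') a → oth (g e') a ≠ z →
      oth (g e) a ≠ oth (g e') a := by
    intro e he e' he' hne h1 h2 h3 h4
    exact hpar e he e' he' hne a (oth (g e) a) (oth_ne (h.wf e he).2.2).symm haz (h4 ▸ h3) h1
      (at_oth _ _) h2 (h4 ▸ at_oth _ _)
  have hu12 := hdist e₁ he1 e₂ he2 h12 ha1 ha2 hz2
  have hu34 := hdist e₃ he3 e₄ he4 h34 ha3 ha4 hz4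
  have hul : ∀ e ∈ E, oth (g e) a ≠ a := fun e he => oth_ne (h.wf e he).2.2
  have hnz : ∀ e ∈ E, At (g e) a → oth (g e) a ≠ z → ¬ At (g e) z := by
    intro e he h1 h2 h3
    rw [at_iff h1] at h3
    rcases h3 with h3 | h3
    · exact haz h3.symm
    · exact h2 h3.symm
  set g₁ := Function.update g e₁ (oth (g e₁) a, oth (g e₂) a) with hg1
  have hg13 : g₁ e₃ = g e₃ := Function.update_of_ne h13.symm _ _
  have hg14 : g₁ e₄ = g e₄ := Function.update_of_ne h14.symm _ _
  set g₂ := Function.update g₁ e₃ (oth (g₁ e₃) a, oth (g₁ e₄) a) with hg2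
  have hg21 : g₂ e₁ = (oth (g e₁) a, oth (g e₂) a) := by
    rw [hg2, Function.update_of_ne h13, hg1, Function.update_self]
  have hg23 : g₂ e₃ = (oth (g e₃) a, oth (g e₄) a) := by
    rw [hg2, Function.update_self, hg13, hg14]
  have hg2i : ∀ i, i ≠ e₁ → i ≠ e₃ → g₂ i = g i := by
    intro i h1 h3
    rw [hg2, Function.update_of_ne h3, hg1, Function.update_of_ne h1]
  have he3E : e₃ ∈ E.erase e₂ := Finset.mem_erase.2 ⟨h32, he3⟩
  have he4E : e₄ ∈ E.erase e₂ := Finset.mem_erase.2 ⟨h24.symm, he4⟩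
  set E₂ := (E.erase e₂).erase e₄ with hE2
  have hmem : ∀ i ∈ E₂, i ∈ E ∧ i ≠ e₂ ∧ i ≠ e₄ := by
    intro i hi
    rw [hE2, Finset.mem_erase, Finset.mem_erase] at hi
    exact ⟨hi.2.2, hi.2.1, hi.1⟩
  have hoff : ∀ i ∈ E₂, ¬ At (g₂ i) a := by
    intro i hi
    obtain ⟨hiE, hi2, hi4⟩ := hmem i hi
    by_cases hi1 : i = e₁
    · subst hi1; rw [hg21]; rintro (h1 | h1)
      · exact hul _ he1 h1
      · exact hul _ he2 h1
    by_cases hi3 : i = e₃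
    · subst hi3; rw [hg23]; rintro (h1 | h1)
      · exact hul _ he3 h1
      · exact hul _ he4 h1
    rw [hg2i i hi1 hi3]
    intro hia
    rcases hFall i (Finset.mem_filter.2 ⟨hiE, hia⟩) with h1 | h1 | h1 | h1
    · exact hi1 h1
    · exact hi2 h1
    · exact hi3 h1
    · exact hi4 h1
  have hwf : Wf S E₂ g₂ := by
    intro i hi
    obtain ⟨hiE, hi2, hi4⟩ := hmem i hi
    have hS : ∀ e ∈ E, oth (g e) a ∈ S := fun e he => oth_mem (h.wf e he).1 (h.wf e he).2.1
    by_cases hi1 : i = e₁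
    · subst hi1; rw [hg21]; exact ⟨hS _ he1, hS _ he2, hu12⟩
    by_cases hi3 : i = e₃
    · subst hi3; rw [hg23]; exact ⟨hS _ he3, hS _ he4, hu34⟩
    rw [hg2i i hi1 hi3]
    exact h.wf i hiE
  have hdeg : ∀ A : Finset V, a ∉ A → deg E₂ g₂ A
      + 2 * (if oth (g e₁) a ∈ A ∧ oth (g e₂) a ∈ A then 1 else 0)
      + 2 * (if oth (g e₃) a ∈ A ∧ oth (g e₄) a ∈ A then 1 else 0) = deg E g A := by
    intro A hA
    have h1 := deg_lift he1 he2 h12 ha1 ha2 hA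
    have h2 := deg_lift (g := g₁) he3E he4E h34 (hg13 ▸ ha3) (hg14 ▸ ha4) hA
    rw [← hg2, hg13, hg14, ← hE2] at h2
    rw [← hg1] at h1
    omega
  set D₁ := Function.update D e₁ (D e₁ * inc (g e₁) (oth (g e₁) a)) with hD1
  have hD13 : D₁ e₃ = D e₃ := Function.update_of_ne h13.symm _ _
  set D₂ := Function.update D₁ e₃ (D₁ e₃ * inc (g₁ e₃) (oth (g₁ e₃) a)) with hD2
  have hD21 : D₂ e₁ = D e₁ * inc (g e₁) (oth (g e₁) a) := by
    rw [hD2, Function.update_of_ne h13, hD1, Function.update_self]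
  have hD23 : D₂ e₃ = D e₃ * inc (g e₃) (oth (g e₃) a) := by
    rw [hD2, Function.update_self, hD13, hg13]
  have hD2i : ∀ i, i ≠ e₁ → i ≠ e₃ → D₂ i = D i := by
    intro i h1 h3
    rw [hD2, Function.update_of_ne h3, hD1, Function.update_of_ne h1]
  have hunit : ∀ e ∈ E, inc (g e) (oth (g e) a) ≠ 0 :=
    fun e he => inc_ne_zero_of_at (at_oth _ _) (h.wf e he).2.2
  obtain ⟨x, hx, hxD⟩ := ih (S.erase a) E₂ g₂ β z D₂ (Finset.card_erase_lt_of_mem haS)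
    { z_mem := Finset.mem_erase.2 ⟨haz.symm, h.z_mem⟩
      wf := wf_erase hwf hoff
      sum := by
        have := h.sum
        rwa [← Finset.add_sum_erase _ _ haS, hβ, zero_add] at this
      nz := by
        intro i hi
        obtain ⟨hiE, -, -⟩ := hmem i hi
        by_cases hi1 : i = e₁
        · subst hi1; rw [hD21]; exact mul_ne_zero (h.nz _ he1) (hunit _ he1)
        by_cases hi3 : i = e₃
        · subst hi3; rw [hD23]; exact mul_ne_zero (h.nz _ he3) (hunit _ he3)
        rw [hD2i i hi1 hi3]; exact h.nz i hiE
      net_z := by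
        rw [hE2, hg2, hD2, net_lift he3E he4E h34 (hg13 ▸ ha3)
          haz (by rw [hg14]; exact hnz _ he4 ha4 hz4), hg1, hD1,
          net_lift he1 he2 h12 ha1 haz (hnz _ he2 ha2 hz2), h.net_z]
      low := by
        have h1 := hdeg {z} (by simpa using haz)
        simp only [Finset.mem_singleton, hz2, hz4, and_false, if_false] at h1
        have h2 := h.low
        rwa [← h1] at h2
      good := by
        intro A hA hA1 hA2
        have haA : a ∉ A := fun h1 =>
          Finset.ne_of_mem_erase (Finset.mem_of_mem_erase (hA h1)) rfl
        have hAz : A ⊆ S.erase z := hA.trans (Finset.erase_subset_erase _ (Finset.erase_subset _ _))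
        have hAne : A ≠ S.erase z := by rintro rfl; exact haA ha
        have h1 := hdeg A haA
        have hone : ∀ e e', oth (g e) a ≠ oth (g e') a → oth (g e) a ∈ A ∧ oth (g e') a ∈ A →
            Good2 (∑ v ∈ A, β v) (deg E g A) := by
          intro e e' hne hm
          exact hbig A hAz (Finset.one_lt_card.2 ⟨_, hm.1, _, hm.2, hne⟩) hAne
        by_cases hp : oth (g e₁) a ∈ A ∧ oth (g e₂) a ∈ A <;>
          by_cases hq : oth (g e₃) a ∈ A ∧ oth (g e₄) a ∈ A
        · -- all neighbours of `a` lie in `A`, so `A ∪ {a}` has cut size `deg A - 4`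
          have h2 := deg_insert h.wf haA
          have h3 : E.filter (fun e => At (g e) a ∧ oth (g e) a ∈ A) = F := by
            rw [hF]
            refine Finset.filter_congr fun i hi => ⟨fun h3 => h3.1, fun h3 => ⟨h3, ?_⟩⟩
            rcases hFall i (Finset.mem_filter.2 ⟨hi, h3⟩) with h1 | h1 | h1 | h1 <;> subst h1
            exacts [hp.1, hp.2, hq.1, hq.2]
          rw [h3, hF4, hd] at h2
          have h4 := h.good (insert a A) (Finset.insert_subset ha hAz) (Finset.insert_nonempty _ _)
            (by
              intro h5
              apply hA2
              rw [Finset.erase_right_comm, ← h5, Finset.erase_insert haA])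
          rw [Finset.sum_insert haA, hβ, zero_add] at h4
          simp only [hp, hq, and_self, if_true] at h1
          have h5 : deg E g (insert a A) = deg E₂ g₂ A := by omega
          rwa [h5] at h4
        · rw [if_pos hp, if_neg hq] at h1
          exact good_of_good2_sub_two (by rw [← h1] at hone; exact hone _ _ hu12 hp)
        · rw [if_neg hp, if_pos hq] at h1
          exact good_of_good2_sub_two (by rw [← h1] at hone; exact hone _ _ hu34 hq)
        · rw [if_neg hp, if_neg hq] at h1
          have h2 := h.good A hAz hA1 hAne
          rwa [← h1] at h2 }
  have hx2 := sol_isolated hoff hβ hx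
  obtain ⟨y₁, hy1, hy1i, hy1e⟩ := sol_lift (g := g₁) he3E he4E h34 (hg13 ▸ ha3) (hg14 ▸ ha4)
    (by rw [hg13]; exact hul _ he3) (by rw [hg14]; exact hul _ he4) hx2
  obtain ⟨y, hy, hyi, hye⟩ := sol_lift he1 he2 h12 ha1 ha2 (hul _ he1) (hul _ he2) hy1
  refine ⟨y, hy, fun i hi hiz => ?_⟩
  have hi2 : i ≠ e₂ := by rintro rfl; exact hnz _ he2 ha2 hz2 hiz
  have hi4 : i ≠ e₄ := by rintro rfl; exact hnz _ he4 ha4 hz4 hiz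
  have hiE : i ∈ E₂ := Finset.mem_erase.2 ⟨hi4, Finset.mem_erase.2 ⟨hi2, hi⟩⟩
  have hsq : ∀ e ∈ E, ∀ r : ZMod 3,
      r * inc (g e) (oth (g e) a) * inc (g e) (oth (g e) a) = r := by
    intro e he r; rw [mul_assoc, inc_sq (at_oth _ _) (h.wf e he).2.2, mul_one]
  have hoz : ∀ e, At (g e) a → At (g e) z → oth (g e) a = z := by
    intro e h1 h2
    rw [at_iff h1] at h2
    exact (h2.resolve_left haz.symm).symm
  by_cases hi1 : i = e₁
  · subst hi1
    rw [hye, hy1i _ h13 h14, hxD _ hiE (by rw [hg21]; exact Or.inl (hoz _ ha1 hiz)), hD21,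
      hsq _ hi]
  by_cases hi3 : i = e₃
  · subst hi3
    rw [hyi _ hi1 hi2, hy1e, hg13, hxD _ hiE (by rw [hg23]; exact Or.inl (hoz _ ha3 hiz)), hD23,
      hsq _ hi]
  rw [hyi _ hi1 hi2, hy1i _ hi3 hi4, hxD _ hiE (by rw [hg2i i hi1 hi3]; exact hiz),
    hD2i i hi1 hi3]

/-! ### Flipping an edge at the prescribed vertex -/

lemma inc_mul {p : V × V} {v : V} (h : At p v) (hne : p.1 ≠ p.2) (w : V) :
    inc p v * inc p w = inc (v, oth p v) w := by
  have h0 := oth_ne (v := v) hne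
  rcases oth_eq h with h1 | h1 <;> generalize oth p v = u at * <;> subst h1 <;>
    simp [inc, h0]

lemma cut_oth {p : V × V} {v : V} (h : At p v) (A : Finset V) : cut p A = cut (v, oth p v) A := by
  rcases oth_eq h with h1 | h1 <;> generalize oth p v = u at * <;> subst h1
  · rfl
  · by_cases h2 : u ∈ A <;> by_cases h3 : v ∈ A <;> simp [cut, h2, h3]

lemma good_add_of_good_sub {b s : ZMod 3} {d : ℕ} (hs : s ≠ 0) (h : Good (b - s) (d - 1)) :
    Good (b + s) d := by
  unfold Good at *
  rcases h with h | ⟨h, -⟩ | ⟨h, hb⟩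
  · left; omega
  · left; omega
  · right; left
    rw [sub_eq_zero.1 hb]
    have key : ∀ r : ZMod 3, r ≠ 0 → r + r ≠ 0 := by decide
    exact ⟨by omega, key s hs⟩

/-- If `e₀` joins `z` to `a` and `e` joins `a` to `b ≠ z`, the end `b` of `e` is moved to `z` while
the prescribed value on `e₀` is negated. As `3 = 0`, a flow of the new multigraph gives one of
the original one. -/
lemma step_flip {S : Finset V} {E : Finset ι} {g : ι → V × V} {β : V → ZMod 3} {z : V}
    {D : ι → ZMod 3} (h : Hyp S E g β z D)
    (ih : ∀ (E' : Finset ι) (g' : ι → V × V) (β' : V → ZMod 3) (D' : ι → ZMod 3),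
      off E' g' z + E'.card < off E g z + E.card → Hyp S E' g' β' z D' → Ext S E' g' β' z D')
    (hbig : ∀ A ⊆ S.erase z, 2 ≤ A.card → A ≠ S.erase z → Good2 (∑ v ∈ A, β v) (deg E g A))
    {e₀ e : ι} (he0 : e₀ ∈ E) (he : e ∈ E) {a b : V} {s : ZMod 3} (hs : s ≠ 0)
    (ha0 : At (g e₀) a) (hz0 : At (g e₀) z) (ha : At (g e) a) (hz : ¬ At (g e) z)
    (hb : oth (g e) a = b) (hD : D e₀ * inc (g e₀) a = - s)
    (hga : Good (β a - s) (deg E g {a} - 1)) (hgb : Good (β b - s) (deg E g {b} - 1))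
    (hlow : Low (β z) (deg E g {z} + 1)) : Ext S E g β z D := by
  have three : (3 : ZMod 3) = 0 := rfl
  obtain ⟨h01, h02, h03⟩ := h.wf e₀ he0
  obtain ⟨h1, h2, h3⟩ := h.wf e he
  have haz : a ≠ z := by rintro rfl; exact hz ha
  have hab : a ≠ b := hb ▸ (oth_ne h3).symm
  have hbz : b ≠ z := by rintro rfl; exact hz (hb ▸ at_oth _ _)
  have hne : e₀ ≠ e := by rintro rfl; exact hz hz0
  have haS : a ∈ S := at_mem h1 h2 ha
  have hbS : b ∈ S := hb ▸ oth_mem h1 h2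
  have ho0 : oth (g e₀) a = z := by
    rw [at_iff ha0] at hz0; exact (hz0.resolve_left haz.symm).symm
  have hmem := Finset.mem_erase.2 ⟨hne, he0⟩
  set g' := Function.update g e (a, z) with hg'
  have hg'e : g' e = (a, z) := by simp [hg']
  have hg'i : ∀ i, i ≠ e → g' i = g i := fun i hi => Function.update_of_ne hi _ _
  set D' := Function.update (Function.update D e₀ (- D e₀)) e s with hD'
  have hD'e : D' e = s := by simp [hD']
  have hD'0 : D' e₀ = - D e₀ := by rw [hD', Function.update_of_ne hne]; simp
  have hD'i : ∀ i, i ≠ e → i ≠ e₀ → D' i = D i := by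
    intro i h1 h2; rw [hD', Function.update_of_ne h1, Function.update_of_ne h2]
  have hD0 : ∀ w, D e₀ * inc (g e₀) w = - s * inc (a, z) w := by
    intro w
    rw [← ho0, ← inc_mul ha0 h03, ← hD, mul_assoc, ← mul_assoc (inc _ a), inc_sq ha0 h03, one_mul]
  have hrest : ∀ (x y : ι → ZMod 3) (w : V), (∀ i, i ≠ e → i ≠ e₀ → x i = y i) →
      net ((E.erase e).erase e₀) g' x w = net ((E.erase e).erase e₀) g y w := by
    intro x y w hxy
    refine net_congr' w fun i hi => ?_
    simp only [Finset.mem_erase] at hi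
    exact ⟨hg'i i hi.2.1, hxy i hi.2.1 hi.1⟩
  have hsum : ∀ A : Finset V, ∑ v ∈ A, (β v + s * inc (a, b) v)
      = ∑ v ∈ A, β v + s * incS (a, b) A := by
    intro A; rw [Finset.sum_add_distrib, ← Finset.mul_sum, sum_inc]
  have hdeg : ∀ A : Finset V, cut (a, b) A + deg E g' A = cut (a, z) A + deg E g A := by
    intro A
    have := deg_update he g (a, z) A
    rwa [cut_oth ha, hb] at this
  have hgood1 : ∀ v ∈ S.erase z, {v} ≠ S.erase z → Good (β v) (deg E g {v}) := by
    intro v hv h5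
    have := h.good {v} (by simpa using hv) (Finset.singleton_nonempty v) h5
    rwa [Finset.sum_singleton] at this
  obtain ⟨x, hx, hxD⟩ := ih E g' (fun v => β v + s * inc (a, b) v) D' (by
      have : off E g' z < off E g z := by
        refine Finset.card_lt_card ⟨fun i hi => ?_, fun hss => ?_⟩
        · obtain ⟨hi1, hi2⟩ := Finset.mem_filter.1 hi
          refine Finset.mem_filter.2 ⟨hi1, ?_⟩
          rwa [hg'i i] at hi2
          rintro rfl; exact hi2 (by rw [hg'e]; exact Or.inr rfl)
        · have := (Finset.mem_filter.1 (hss (Finset.mem_filter.2 ⟨he, hz⟩))).2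
          exact this (by rw [hg'e]; exact Or.inr rfl)
      omega)
    { z_mem := h.z_mem
      wf := by
        intro i hi
        by_cases hie : i = e
        · subst hie; rw [hg'e]; exact ⟨haS, h.z_mem, haz⟩
        · rw [hg'i i hie]; exact h.wf i hi
      sum := by
        rw [hsum, h.sum]; simp [incS, haS, hbS]
      nz := by
        intro i hi
        by_cases hie : i = e
        · subst hie; rwa [hD'e]
        by_cases hi0 : i = e₀
        · subst hi0; rw [hD'0]; exact neg_ne_zero.2 (h.nz _ hi)
        rw [hD'i i hie hi0]; exact h.nz i hi
      net_z := by
        rw [← net_erase he, ← net_erase hmem, hrest D' D z hD'i, ← h.net_z, ← net_erase he g D,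
          ← net_erase hmem g D, hg'i _ hne, hD'e, hD'0, hg'e, neg_mul, hD0, inc_of_not_at hz]
        have h5 : inc (a, z) z = -1 := by simp [inc, haz]
        have h6 : inc (a, b) z = 0 := by simp [inc, haz, hbz]
        rw [h5, h6]
        linear_combination (-s) * three
      low := by
        have h5 := hdeg {z}
        have h6 : cut (a, b) {z} = 0 := by simp [cut, haz, hbz]
        have h7 : cut (a, z) {z} = 1 := by simp [cut, haz]
        have h8 : inc (a, b) z = 0 := by simp [inc, haz, hbz]
        rw [h6, h7, zero_add, add_comm] at h5
        rwa [h5, h8, mul_zero, add_zero]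
      good := by
        intro A hA hA1 hA2
        have hzA : z ∉ A := fun h5 => Finset.ne_of_mem_erase (hA h5) rfl
        have h5 := hdeg A
        rw [hsum]
        by_cases haA : a ∈ A <;> by_cases hbA : b ∈ A
        · have h6 : incS (a, b) A = 0 := by simp [incS, haA, hbA]
          have h7 : cut (a, b) A = 0 := by simp [cut, haA, hbA]
          have h8 : cut (a, z) A = 1 := by simp [cut, haA, hzA]
          have h9 := hbig A hA (Finset.one_lt_card.2 ⟨a, haA, b, hbA, hab⟩) hA2
          rw [show deg E g' A = deg E g A + 1 by omega, h6, mul_zero, add_zero]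
          unfold Good2 at h9; unfold Good; left; omega
        · have h6 : incS (a, b) A = 1 := by simp [incS, haA, hbA]
          have h7 : cut (a, b) A = 1 := by simp [cut, haA, hbA]
          have h8 : cut (a, z) A = 1 := by simp [cut, haA, hzA]
          rw [show deg E g' A = deg E g A by omega, h6, mul_one]
          by_cases hA3 : A = {a}
          · subst hA3
            rw [Finset.sum_singleton]
            exact good_add_of_good_sub hs hga
          · exact (hbig A hA (two_le_card_of_ne haA hA3) hA2).good
        · have h6 : incS (a, b) A = -1 := by simp [incS, haA, hbA]
          have h7 : cut (a, b) A = 1 := by simp [cut, haA, hbA]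
          have h8 : cut (a, z) A = 0 := by simp [cut, haA, hzA]
          rw [h6, mul_neg_one, ← sub_eq_add_neg]
          by_cases hA3 : A = {b}
          · subst hA3
            rw [show deg E g' {b} = deg E g {b} - 1 by omega, Finset.sum_singleton]
            exact hgb
          · have h9 := hbig A hA (two_le_card_of_ne hbA hA3) hA2
            rw [show deg E g A = 1 + deg E g' A by omega] at h9
            exact good_of_good2_sub_one hs h9
        · have h6 : incS (a, b) A = 0 := by simp [incS, haA, hbA]
          have h7 : cut (a, b) A = 0 := by simp [cut, haA, hbA]
          have h8 : cut (a, z) A = 0 := by simp [cut, haA, hzA]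
          rw [show deg E g' A = deg E g A by omega, h6, mul_zero, add_zero]
          exact h.good A hA hA1 hA2 }
  have hxe : x e = s := by rw [hxD e he (by rw [hg'e]; exact Or.inr rfl), hD'e]
  have hx0 : x e₀ = - D e₀ := by rw [hxD e₀ he0 (by rwa [hg'i _ hne]), hD'0]
  set y := Function.update (Function.update x e₀ (D e₀)) e (- s * inc (g e) a) with hy
  have hye : y e = - s * inc (g e) a := by simp [hy]
  have hy0 : y e₀ = D e₀ := by rw [hy, Function.update_of_ne hne]; simp
  have hyi : ∀ i, i ≠ e → i ≠ e₀ → x i = y i := by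
    intro i h1 h2; rw [hy, Function.update_of_ne h1, Function.update_of_ne h2]
  refine ⟨y, ⟨fun i hi => ?_, fun w hw => ?_⟩, fun i hi hiz => ?_⟩
  · by_cases hie : i = e
    · subst hie; rw [hye]
      exact mul_ne_zero (neg_ne_zero.2 hs) (inc_ne_zero_of_at ha h3)
    by_cases hi0 : i = e₀
    · subst hi0; rw [hy0]; exact h.nz _ hi
    rw [← hyi i hie hi0]; exact hx.1 i hi
  · have h5 := hx.2 w hw
    rw [← net_erase he, ← net_erase hmem, hrest x y w hyi, hg'i _ hne, hxe, hx0, hg'e, neg_mul,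
      hD0] at h5
    rw [← net_erase he, ← net_erase hmem, hye, hy0, hD0, mul_assoc, inc_mul ha h3, hb]
    linear_combination h5 - s * inc (a, z) w * three
  · have hie : i ≠ e := by rintro rfl; exact hz hiz
    by_cases hi0 : i = e₀
    · subst hi0; exact hy0
    rw [← hyi i hie hi0, hxD i hi (by rwa [hg'i i hie]), hD'i i hie hi0]

/-! ### The extension theorem -/

lemma exists_sign {b : ZMod 3} {d : ℕ} (h : Good b d) (h4 : ¬ (d = 4 ∧ b = 0)) :
    ∃ s : ZMod 3, s ≠ 0 ∧ Good (b - s) (d - 1) := by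
  unfold Good at *
  rcases h with h | ⟨h, hb⟩ | h
  · by_cases hb : b = 1
    · subst hb; exact ⟨-1, by decide, by
        by_cases h7 : 7 ≤ d
        · left; omega
        · right; left; exact ⟨by omega, by decide⟩⟩
    · refine ⟨1, by decide, ?_⟩
      by_cases h7 : 7 ≤ d
      · left; omega
      · right; left; exact ⟨by omega, sub_ne_zero.2 hb⟩
  · exact ⟨b, hb, by right; right; exact ⟨by omega, sub_self b⟩⟩
  · exact absurd h h4

/-- The configuration in which no contraction, lifting or deletion applies: every vertex other
than `z` has a value `s` such that an edge with outflow `s` there can be deleted. This `s` is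
then the same at all vertices, and an edge can be flipped. -/
lemma step_final {S : Finset V} {E : Finset ι} {g : ι → V × V} {β : V → ZMod 3} {z : V}
    {D : ι → ZMod 3} (h : Hyp S E g β z D)
    (ih : ∀ (E' : Finset ι) (g' : ι → V × V) (β' : V → ZMod 3) (D' : ι → ZMod 3),
      off E' g' z + E'.card < off E g z + E.card → Hyp S E' g' β' z D' → Ext S E' g' β' z D')
    (hbig : ∀ A ⊆ S.erase z, 2 ≤ A.card → A ≠ S.erase z → Good2 (∑ v ∈ A, β v) (deg E g A))
    (hcard : 3 ≤ S.card)
    (h4 : ∀ v ∈ S.erase z, ¬ (deg E g {v} = 4 ∧ β v = 0))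
    (h3 : (∀ e ∈ E, ¬ At (g e) z) → ∀ v ∈ S.erase z, Good2 (β v) (deg E g {v}))
    (h5 : ∀ e ∈ E, ¬ At (g e) z → ∀ a, At (g e) a → ∀ s : ZMod 3, s ≠ 0 →
      Good (β a - s) (deg E g {a} - 1) → Good (β (oth (g e) a) + s) (deg E g {oth (g e) a} - 1) →
      False)
    (h6 : ∀ e ∈ E, At (g e) z → ∀ a, a ≠ z → At (g e) a →
      ¬ Good (β a - D e * inc (g e) a) (deg E g {a} - 1)) : Ext S E g β z D := by
  have hcard' := Finset.card_erase_of_mem h.z_mem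
  have hsing : ∀ v, ({v} : Finset V) ≠ S.erase z := by
    intro v h1; rw [← h1, Finset.card_singleton] at hcard'; omega
  have hgood1 : ∀ v ∈ S.erase z, Good (β v) (deg E g {v}) := by
    intro v hv
    have := h.good {v} (by simpa using hv) (Finset.singleton_nonempty v) (hsing v)
    rwa [Finset.sum_singleton] at this
  have hσ : ∀ v, ∃ s : ZMod 3, v ∈ S.erase z → s ≠ 0 ∧ Good (β v - s) (deg E g {v} - 1) := by
    intro v
    by_cases hv : v ∈ S.erase z
    · obtain ⟨s, hs⟩ := exists_sign (hgood1 v hv) (h4 v hv)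
      exact ⟨s, fun _ => hs⟩
    · exact ⟨0, fun h1 => absurd h1 hv⟩
  choose σ hσ using hσ
  have hpm : ∀ r s : ZMod 3, r ≠ 0 → s ≠ 0 → r ≠ -s → r = s := by decide
  have hends : ∀ e ∈ E, ¬ At (g e) z → ∀ a, At (g e) a → a ∈ S.erase z ∧
      oth (g e) a ∈ S.erase z := by
    intro e he hz a ha
    obtain ⟨h1, h2, -⟩ := h.wf e he
    refine ⟨Finset.mem_erase.2 ⟨?_, at_mem h1 h2 ha⟩, Finset.mem_erase.2 ⟨?_, oth_mem h1 h2⟩⟩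
    · rintro rfl; exact hz ha
    · intro h3; exact hz (h3 ▸ at_oth (g e) a)
  have hsame : ∀ e ∈ E, ¬ At (g e) z → ∀ a, At (g e) a → σ (oth (g e) a) = σ a := by
    intro e he hz a ha
    obtain ⟨haS, hbS⟩ := hends e he hz a ha
    refine hpm _ _ (hσ _ hbS).1 (hσ _ haS).1 fun h1 => ?_
    have h2 := (hσ _ hbS).2
    rw [h1, sub_neg_eq_add] at h2
    exact h5 e he hz a ha _ (hσ _ haS).1 (hσ _ haS).2 h2
  have hzout : ∀ e ∈ E, At (g e) z → ∀ a, a ≠ z → At (g e) a → D e * inc (g e) a = - σ a := by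
    intro e he hz a haz ha
    obtain ⟨h1, h2, hne⟩ := h.wf e he
    have haS : a ∈ S.erase z := Finset.mem_erase.2 ⟨haz, at_mem h1 h2 ha⟩
    refine hpm _ _ (mul_ne_zero (h.nz e he) (inc_ne_zero_of_at ha hne))
      (neg_ne_zero.2 (hσ a haS).1) fun h3 => ?_
    rw [neg_neg] at h3
    exact h6 e he hz a haz ha (h3 ▸ (hσ a haS).2)
  -- all vertices have the same value `s`
  have hunif : ∃ s : ZMod 3, s ≠ 0 ∧ ∀ v ∈ S.erase z, σ v = s := by
    by_contra hcon
    push Not at hcon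
    set P := (S.erase z).filter (fun v => σ v = 1) with hP
    set Q := (S.erase z).filter (fun v => σ v = -1) with hQ
    obtain ⟨q, hqS, hq⟩ := hcon 1 (by decide)
    obtain ⟨p, hpS, hp⟩ := hcon (-1) (by decide)
    have hp' : σ p = 1 := hpm _ _ (hσ p hpS).1 (by decide) hp
    have hq' : σ q = -1 := hpm _ _ (hσ q hqS).1 (by decide) (by rwa [neg_neg])
    have hpP : p ∈ P := Finset.mem_filter.2 ⟨hpS, hp'⟩
    have hqQ : q ∈ Q := Finset.mem_filter.2 ⟨hqS, hq'⟩
    have hgP := h.good P (Finset.filter_subset _ _) ⟨p, hpP⟩ (by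
      intro h1; rw [← h1] at hqS; exact hq (Finset.mem_filter.1 hqS).2)
    have hgQ := h.good Q (Finset.filter_subset _ _) ⟨q, hqQ⟩ (by
      intro h1; rw [← h1] at hpS; exact hp (Finset.mem_filter.1 hpS).2)
    -- edges avoiding `z` join vertices of equal value, so the cuts of `P` and `Q` lie at `z`
    have hle : deg E g P + deg E g Q ≤ deg E g {z} := by
      unfold deg
      rw [← Finset.sum_add_distrib]
      refine Finset.sum_le_sum fun e he => ?_
      obtain ⟨h1, h2, hne⟩ := h.wf e he
      by_cases hz : At (g e) z
      · obtain hzP : z ∉ P := by simp [hP]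
        obtain hzQ : z ∉ Q := by simp [hQ]
        rw [cut_oth hz P, cut_oth hz Q, cut_singleton hne, if_pos hz]
        by_cases h7 : oth (g e) z ∈ P
        · have : oth (g e) z ∉ Q := by
            intro h8
            have h9 := (Finset.mem_filter.1 h7).2
            rw [(Finset.mem_filter.1 h8).2] at h9
            exact absurd h9 (by decide)
          simp [cut, hzP, hzQ, h7, this]
        · have := cut_le_one (z, oth (g e) z) Q
          have h8 : cut (z, oth (g e) z) P = 0 := by simp [cut, hzP, h7]
          omega
      · have ha : At (g e) (g e).1 := Or.inl rfl
        obtain ⟨h7, h8⟩ := hends e he hz _ ha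
        have h9 := hsame e he hz _ ha
        have h10 : cut (g e) P = 0 := by
          rw [cut_oth ha]; simp only [cut, hP, Finset.mem_filter, h7, h8, h9, true_and, if_true]
        have h11 : cut (g e) Q = 0 := by
          rw [cut_oth ha]; simp only [cut, hQ, Finset.mem_filter, h7, h8, h9, true_and, if_true]
        omega
    have h7 := h.low
    unfold Good Low at *
    omega
  obtain ⟨s, hs, hsσ⟩ := hunif
  have hPs : ∀ v ∈ S.erase z, Good (β v - s) (deg E g {v} - 1) := by
    intro v hv; have := (hσ v hv).2; rwa [hsσ v hv] at this
  -- the prescribed flow carries `s` along every edge out of `z`, so `β z ≡ s · deg z`; this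
  -- leaves slack at `z` for a further edge
  have hbz : β z = s * (deg E g {z} : ℕ) := by
    rw [← h.net_z]
    unfold net deg
    rw [Nat.cast_sum, Finset.mul_sum]
    refine Finset.sum_congr rfl fun e he => ?_
    obtain ⟨h1, h2, hne⟩ := h.wf e he
    rw [cut_singleton hne]
    split_ifs with hz
    · have h7 : oth (g e) z ≠ z := oth_ne hne
      have h8 := hzout e he hz _ h7 (at_oth _ _)
      rw [inc_oth hz hne, mul_neg, neg_inj, hsσ _ (Finset.mem_erase.2 ⟨h7, oth_mem h1 h2⟩)] at h8
      rw [h8]; simp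
    · rw [inc_of_not_at hz]; simp
  have hlow : deg E g {z} ≤ 5 ∧ Low (β z) (deg E g {z} + 1) := by
    have h7 := h.low
    have key6 : ∀ s : ZMod 3, s * (6 : ℕ) = 0 := by decide
    have key7 : ∀ s : ZMod 3, s ≠ 0 → s * (7 : ℕ) ≠ 0 := by decide
    have key5 : ∀ s : ZMod 3, s ≠ 0 → s * (5 : ℕ) ≠ 0 := by decide
    have h8 : deg E g {z} ≤ 5 := by
      rcases h7 with h7 | ⟨h7, h8⟩ | ⟨h7, h8⟩
      · exact h7
      · rw [hbz, h7] at h8; exact absurd (key6 s) h8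
      · rw [hbz, h7] at h8; exact absurd h8 (key7 s hs)
    refine ⟨h8, ?_⟩
    by_cases h9 : deg E g {z} = 5
    · right; left
      refine ⟨by omega, ?_⟩
      rw [hbz, h9]; exact key5 s hs
    · left; omega
  by_cases hz : ∀ e ∈ E, ¬ At (g e) z
  · -- an isolated `z` leaves slack everywhere, so some edge could be deleted
    exfalso
    obtain ⟨v, hv⟩ : (S.erase z).Nonempty := Finset.card_pos.1 (by omega)
    have h7 := h3 hz
    have hcardv : 0 < (E.filter (fun e => At (g e) v)).card := by
      rw [← deg_singleton h.wf]
      have := h7 v hv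
      unfold Good2 at this; omega
    obtain ⟨e, he⟩ := Finset.card_pos.1 hcardv
    obtain ⟨heE, hev⟩ := Finset.mem_filter.1 he
    obtain ⟨-, hb⟩ := hends e heE (hz e heE) v hev
    have key : ∀ (b r : ZMod 3) (d : ℕ), r ≠ 0 → Good2 b d → Good (b - r) (d - 1) := by
      intro b r d hr hd
      refine good_of_good2_sub_one hr ?_
      rwa [show 1 + (d - 1) = d by unfold Good2 at hd; omega]
    refine h5 e heE (hz e heE) v hev 1 one_ne_zero (key _ _ _ one_ne_zero (h7 v hv)) ?_
    rw [← sub_neg_eq_add]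
    exact key _ _ _ (by decide) (h7 _ hb)
  · push Not at hz
    obtain ⟨e₀, he0, hz0⟩ := hz
    obtain ⟨h01, h02, h0ne⟩ := h.wf e₀ he0
    set a := oth (g e₀) z with ha
    have haz : a ≠ z := oth_ne h0ne
    have haS : a ∈ S.erase z := Finset.mem_erase.2 ⟨haz, oth_mem h01 h02⟩
    have ha0 : At (g e₀) a := at_oth _ _
    -- a neighbour of `z` has an edge avoiding `z`, since otherwise the cut between
    -- `{a, z}` and the remaining vertices would be too small
    obtain ⟨e, he, hea, hez⟩ : ∃ e ∈ E, At (g e) a ∧ ¬ At (g e) z := by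
      by_contra hcon
      push Not at hcon
      have h7 := deg_insert h.wf (v := a) (A := {z}) (by simpa using haz)
      have h8 : E.filter (fun e => At (g e) a ∧ oth (g e) a ∈ ({z} : Finset V))
          = E.filter (fun e => At (g e) a) := by
        refine Finset.filter_congr fun i hi => ⟨fun h9 => h9.1, fun h9 => ⟨h9, ?_⟩⟩
        have h10 := hcon i hi h9
        rw [at_iff h9] at h10
        rw [Finset.mem_singleton]
        exact (h10.resolve_left haz.symm).symm
      rw [h8, ← deg_singleton h.wf] at h7
      have h9 := hgood1 a haS
      have hsub : ({a, z} : Finset V) ⊆ S := by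
        intro u hu
        rcases Finset.mem_insert.1 hu with rfl | hu
        · exact Finset.mem_of_mem_erase haS
        · rw [Finset.mem_singleton.1 hu]; exact h.z_mem
      have h2 : ((S \ {a, z}).card) + 2 = S.card := by
        rw [← Finset.card_sdiff_add_card_eq_card hsub, Finset.card_pair haz]
      have h3 := h.good (S \ {a, z}) (by
          intro u hu
          obtain ⟨h4, h5⟩ := Finset.mem_sdiff.1 hu
          refine Finset.mem_erase.2 ⟨?_, h4⟩
          rintro rfl; exact h5 (by simp)) (Finset.card_pos.1 (by omega)) (by
          intro h4
          rw [← h4] at haS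
          exact (Finset.mem_sdiff.1 haS).2 (by simp))
      rw [deg_compl h.wf] at h3
      have := hlow.1
      unfold Good at h3 h9
      omega
    have hzo := hzout e₀ he0 hz0 a haz ha0
    rw [hsσ a haS] at hzo
    exact step_flip h ih hbig he0 he hs ha0 hz0 hea hez rfl hzo (hPs a haS)
      (hPs _ (hends e he hez a hea).2) hlow.2

/-- The extension theorem of Lovász, Thomassen, Wu and Zhang for `ℤ₃`-flows. -/
theorem ext_of_hyp {S : Finset V} {E : Finset ι} {g : ι → V × V} {β : V → ZMod 3} {z : V}
    {D : ι → ZMod 3} (h : Hyp S E g β z D) : Ext S E g β z D := by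
  induction hn : S.card using Nat.strong_induction_on generalizing S E g β z D with
  | _ n ih1 =>
  have ihS : ∀ (S' : Finset V) (E' : Finset ι) (g' : ι → V × V) (β' : V → ZMod 3) (z' : V)
      (D' : ι → ZMod 3), S'.card < S.card → Hyp S' E' g' β' z' D' → Ext S' E' g' β' z' D' :=
    fun S' E' g' β' z' D' hlt h' => ih1 _ (hn ▸ hlt) h' rfl
  clear ih1 hn
  induction hm : off E g z + E.card using Nat.strong_induction_on generalizing E g β D with
  | _ m ih2 =>
  have ih : ∀ (E' : Finset ι) (g' : ι → V × V) (β' : V → ZMod 3) (D' : ι → ZMod 3),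
      off E' g' z + E'.card < off E g z + E.card → Hyp S E' g' β' z D' → Ext S E' g' β' z D' :=
    fun E' g' β' D' hlt h' => ih2 _ (hm ▸ hlt) h' rfl
  clear ih2 hm
  by_cases hcard : S.card ≤ 2
  · -- at most one vertex besides `z`, whose demand is met automatically
    have hc := Finset.card_erase_of_mem h.z_mem
    refine ⟨D, ?_, fun _ _ _ => rfl⟩
    by_cases hne : (S.erase z).Nonempty
    · obtain ⟨a, ha⟩ := hne
      refine sol_of_erase h.wf h.sum h.nz (Finset.mem_of_mem_erase ha) fun v hv hva => ?_
      by_cases hvz : v = z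
      · rw [hvz, h.net_z]
      · have := Finset.one_lt_card.2 ⟨a, ha, v, Finset.mem_erase.2 ⟨hvz, hv⟩, fun h1 => hva h1.symm⟩
        omega
    · refine sol_of_erase h.wf h.sum h.nz h.z_mem fun v hv hvz => ?_
      exact absurd ⟨v, Finset.mem_erase.2 ⟨hvz, hv⟩⟩ hne
  replace hcard : 3 ≤ S.card := by omega
  by_contra hcon
  have hbig : ∀ A ⊆ S.erase z, 2 ≤ A.card → A ≠ S.erase z →
      Good2 (∑ v ∈ A, β v) (deg E g A) := by
    intro A hA h2 hne
    by_contra hbad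
    exact hcon (step_contract h ihS hA h2 hne hbad)
  have hpar : ∀ e ∈ E, ∀ e' ∈ E, e ≠ e' → ∀ a b, a ≠ b → a ≠ z → b ≠ z → At (g e) a →
      At (g e) b → At (g e') a → At (g e') b → False :=
    fun e he e' he' hne a b hab haz hbz h1 h2 h3 h4 =>
      hcon (step_parallel h ihS he he' hne hab h1 h2 h3 h4 haz hbz)
  refine hcon (step_final h ih hbig hcard ?_ ?_ ?_ ?_)
  · rintro v hv ⟨hd, hβ⟩
    exact hcon (step_lift h ihS hbig hpar hcard hv hd hβ)
  · intro hz v hv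
    by_contra hbad
    exact hcon (step_isolated h ihS hcard hz hv hbad)
  · intro e he hz a ha s hs hga hgb
    have hne := (h.wf e he).2.2
    have hsq := inc_sq ha hne
    refine hcon (step_delete h ih hbig he (t := s * inc (g e) a)
      (mul_ne_zero hs (inc_ne_zero_of_at ha hne)) (fun h1 => absurd h1 hz) fun v hv _ => ?_)
    rw [at_iff ha] at hv
    rcases hv with rfl | rfl
    · rwa [mul_assoc, hsq, mul_one]
    · rwa [inc_oth ha hne, mul_assoc, mul_neg, hsq, mul_neg_one, sub_neg_eq_add]
  · intro e he hz a haz ha hg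
    refine hcon (step_delete h ih hbig he (h.nz e he) (fun _ => rfl) fun v hv hvz => ?_)
    rw [at_iff hz] at hv ha
    rw [hv.resolve_left hvz, ← ha.resolve_left haz]
    exact hg

/-! ### Flows for every boundary in dense multigraphs -/

/-- The correction term in the density conditions. -/
def cz (k : ℕ) : ℕ := if k ≤ 1 then 0 else if k = 2 then 3 else if k = 3 then 5 else 6

/-- Every identification of the vertices into `k ≥ 2` classes leaves at least `4k - 3 - cz k`
edges. -/
def Zc (S : Finset V) (E : Finset ι) (g : ι → V × V) : Prop :=
  ∀ φ : V → V, 2 ≤ (S.image φ).card →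
    4 * (S.image φ).card ≤ (quoE E g φ).card + cz (S.image φ).card + 3

/-- The edges with both ends in `T`. -/
def inE (E : Finset ι) (g : ι → V × V) (T : Finset V) : Finset ι :=
  E.filter (fun e => (g e).1 ∈ T ∧ (g e).2 ∈ T)

lemma mem_inE {E : Finset ι} {g : ι → V × V} {T : Finset V} {e : ι} :
    e ∈ inE E g T ↔ e ∈ E ∧ (g e).1 ∈ T ∧ (g e).2 ∈ T := by
  unfold inE; rw [Finset.mem_filter]

lemma cz_le (k : ℕ) : cz k ≤ 6 := by unfold cz; split_ifs <;> omega

lemma cz_two {k : ℕ} (h : 2 ≤ k) : 3 ≤ cz k := by unfold cz; split_ifs <;> omega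

lemma cz_three {k : ℕ} (h : 3 ≤ k) : 5 ≤ cz k := by unfold cz; split_ifs <;> omega

lemma cz_four {k : ℕ} (h : 4 ≤ k) : cz k = 6 := by unfold cz; split_ifs <;> omega

lemma card_split {S : Finset V} {E : Finset ι} {g : ι → V × V} (hw : Wf S E g) (A : Finset V) :
    E.card = deg E g A + (inE E g A).card + (inE E g (S \ A)).card := by
  unfold deg inE
  rw [Finset.card_filter, Finset.card_filter, Finset.card_eq_sum_ones, ← Finset.sum_add_distrib,
    ← Finset.sum_add_distrib]
  refine Finset.sum_congr rfl fun e he => ?_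
  obtain ⟨h1, h2, -⟩ := hw e he
  by_cases h3 : (g e).1 ∈ A <;> by_cases h4 : (g e).2 ∈ A <;> simp [cut, h1, h2, h3, h4]

lemma inE_filter (E : Finset ι) (g : ι → V × V) (T : Finset V) (φ : V → V) :
    (inE E g T).card = (quoE (inE E g T) g φ).card
      + ∑ w ∈ T.image φ, (inE E g (T.filter (fun v => φ v = w))).card := by
  unfold quoE
  rw [← Finset.card_filter_add_card_filter_not (s := inE E g T)
    (fun e => φ (g e).1 ≠ φ (g e).2)]
  congr 1
  rw [Finset.card_eq_sum_card_fiberwise (f := fun e => φ (g e).1) (t := T.image φ)]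
  · refine Finset.sum_congr rfl fun w _ => ?_
    congr 1
    ext e
    simp only [Finset.mem_filter, mem_inE, not_not]
    constructor
    · rintro ⟨⟨⟨h1, h2, h3⟩, h4⟩, h5⟩
      exact ⟨h1, ⟨h2, h5⟩, h3, h4 ▸ h5⟩
    · rintro ⟨h1, ⟨h2, h5⟩, h3, h4⟩
      exact ⟨⟨⟨h1, h2, h3⟩, h5.trans h4.symm⟩, h5⟩
  · intro e he
    have he' := (Finset.mem_filter.1 he).1
    exact Finset.mem_image_of_mem _ (mem_inE.1 he').2.1

lemma class_bound {E : Finset ι} {g : ι → V × V} {T : Finset V} {φ : V → V}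
    (h : ∀ w ∈ T.image φ, (inE E g (T.filter (fun v => φ v = w))).card
      + cz (T.filter (fun v => φ v = w)).card + 4 ≤ 4 * (T.filter (fun v => φ v = w)).card) :
    (inE E g T).card + ∑ w ∈ T.image φ, cz (T.filter (fun v => φ v = w)).card
      + 4 * (T.image φ).card ≤ (quoE (inE E g T) g φ).card + 4 * T.card := by
  have h1 := Finset.sum_le_sum h
  rw [Finset.sum_add_distrib, Finset.sum_add_distrib, ← Finset.mul_sum, Finset.sum_const,
    smul_eq_mul] at h1
  have h2 := Finset.card_eq_sum_card_image φ T
  have h3 := inE_filter E g T φ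
  have h4 : ∑ w ∈ T.image φ, (T.filter (fun v => φ v = w)).card = T.card := by rw [h2]
  rw [h4] at h1
  omega

lemma exists_class {T : Finset V} {φ : V → V} {r : ℕ} (h : r * (T.image φ).card < T.card) :
    ∃ w ∈ T.image φ, r + 1 ≤ (T.filter (fun v => φ v = w)).card := by
  by_contra hcon
  push Not at hcon
  have h2 := Finset.card_eq_sum_card_image φ T
  have h4 : ∑ w ∈ T.image φ, (T.filter (fun v => φ v = w)).card = T.card := by rw [h2]
  have h3 : ∑ w ∈ T.image φ, (T.filter (fun v => φ v = w)).card ≤ ∑ w ∈ T.image φ, r :=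
    Finset.sum_le_sum fun w hw => by have := hcon w hw; omega
  rw [h4, Finset.sum_const, smul_eq_mul, mul_comm] at h3
  omega

lemma class_le_sum {T : Finset V} (φ : V → V) {w : V} (hw : w ∈ T.image φ) :
    cz (T.filter (fun v => φ v = w)).card
      ≤ ∑ w ∈ T.image φ, cz (T.filter (fun v => φ v = w)).card :=
  Finset.single_le_sum (f := fun w => cz (T.filter (fun v => φ v = w)).card)
    (fun _ _ => Nat.zero_le _) hw

/-- A vertex set spanning many edges contains a set satisfying `Zc`. -/
lemma deficiency {E : Finset ι} {g : ι → V × V} (hl : ∀ e ∈ E, (g e).1 ≠ (g e).2) {T : Finset V}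
    (hT : T.Nonempty) (hno : ∀ T' ⊆ T, 2 ≤ T'.card → ¬ Zc T' (inE E g T') g) :
    (inE E g T).card + cz T.card + 4 ≤ 4 * T.card := by
  induction hn : T.card using Nat.strong_induction_on generalizing T with
  | _ n ih =>
  subst hn
  have hpos := Finset.card_pos.2 hT
  by_cases h1 : T.card = 1
  · obtain ⟨v, rfl⟩ := Finset.card_eq_one.1 h1
    have : inE E g {v} = ∅ := by
      refine Finset.eq_empty_of_forall_notMem fun e he => ?_
      obtain ⟨he, h2, h3⟩ := mem_inE.1 he
      rw [Finset.mem_singleton] at h2 h3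
      exact hl e he (h2.trans h3.symm)
    rw [this]; simp [cz]
  have hbad := hno T subset_rfl (by omega)
  unfold Zc at hbad
  push Not at hbad
  obtain ⟨φ, hk, hφ⟩ := hbad
  have hkn : (T.image φ).card ≤ T.card := Finset.card_image_le
  have hb := class_bound (E := E) (g := g) (T := T) (φ := φ) (fun w hw => by
    obtain ⟨v, hv, rfl⟩ := Finset.mem_image.1 hw
    refine ih _ ?_ ⟨v, Finset.mem_filter.2 ⟨hv, rfl⟩⟩ (fun T' hT' h2 =>
      hno T' (hT'.trans (Finset.filter_subset _ _)) h2) rfl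
    refine Finset.card_lt_card ⟨Finset.filter_subset _ _, fun hss => ?_⟩
    have : T.image φ ⊆ {φ v} := by
      intro u hu
      obtain ⟨t, ht, rfl⟩ := Finset.mem_image.1 hu
      rw [Finset.mem_singleton]
      exact (Finset.mem_filter.1 (hss ht)).2
    have := Finset.card_le_card this
    rw [Finset.card_singleton] at this
    omega)
  by_cases hkT : (T.image φ).card = T.card
  · rw [hkT] at hφ hb
    omega
  · obtain ⟨w, hw, hw2⟩ := exists_class (T := T) (φ := φ) (r := 1) (by omega)
    have h3 := class_le_sum φ hw
    have h4 := cz_two hw2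
    have h5 := cz_two hk
    have h6 := cz_le T.card
    omega

lemma Zc.quo {S : Finset V} {E : Finset ι} {g : ι → V × V} (h : Zc S E g) (φ : V → V) :
    Zc (S.image φ) (quoE E g φ) (mapE g φ) := by
  intro ψ hψ
  have h1 : (S.image φ).image ψ = S.image (ψ ∘ φ) := Finset.image_image
  have h2 : quoE (quoE E g φ) (mapE g φ) ψ = quoE E g (ψ ∘ φ) := by
    unfold quoE
    rw [Finset.filter_filter]
    refine Finset.filter_congr fun e _ => ⟨fun h3 => h3.2, fun h3 => ⟨fun h4 => ?_, h3⟩⟩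
    exact h3 (congrArg ψ h4)
  rw [h1] at hψ ⊢
  rw [h2]
  exact h _ hψ

/-- A flow of the contraction of `T` extends to a flow as soon as all demands on `T` can be met
by the edges inside `T`. -/
lemma sol_extend {S T : Finset V} {E : Finset ι} {g : ι → V × V} {β : V → ZMod 3} {a : V}
    (hw : Wf S E g) (hTS : T ⊆ S) (ha : a ∈ T)
    (hT : ∀ γ : V → ZMod 3, ∑ v ∈ T, γ v = 0 → ∃ x, Sol T (inE E g T) g γ x) {x : ι → ZMod 3}
    (hx : Sol (S.image (con T a)) (quoE E g (con T a)) (mapE g (con T a)) (push S (con T a) β) x) :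
    ∃ y, Sol S E g β y := by
  have hwT : Wf T (inE E g T) g := by
    intro e he
    obtain ⟨h1, h2, h3⟩ := mem_inE.1 he
    exact ⟨h2, h3, (hw e h1).2.2⟩
  have hsub : inE E g T ⊆ E := Finset.filter_subset _ _
  set F := E \ inE E g T with hF
  have hFq : ∀ e ∈ F, e ∈ quoE E g (con T a) := by
    intro e he
    obtain ⟨h1, h2⟩ := Finset.mem_sdiff.1 he
    by_cases h3 : (g e).1 ∈ T
    · have h4 : (g e).2 ∉ T := fun h4 => h2 (mem_inE.2 ⟨h1, h3, h4⟩)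
      exact (at_mem_quo hw ha h4 h1 (Or.inr rfl)).1
    · exact (at_mem_quo hw ha h3 h1 (Or.inl rfl)).1
  have hqF : ∀ e ∈ quoE E g (con T a), e ∈ F := by
    intro e he
    exact Finset.mem_sdiff.2 ⟨(Finset.mem_filter.1 he).1,
      fun h1 => notMem_quo_con he (mem_inE.1 h1).2⟩
  have hnetadd : ∀ (y : ι → ZMod 3) (v : V),
      net F g y v + net (inE E g T) g y v = net E g y v :=
    fun y v => Finset.sum_sdiff (f := fun e => y e * inc (g e) v) hsub
  obtain ⟨y, hy⟩ := hT (fun v => β v - net F g x v) (by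
    have h1 := hx.2 a (Finset.mem_image.2 ⟨a, hTS ha, by simp [con]⟩)
    rw [net_quo hw, push_con_self hTS ha, push_con_self hTS ha] at h1
    rw [Finset.sum_sub_distrib, ← h1, ← Finset.sum_sub_distrib, ← sum_net_eq_zero hwT x]
    refine Finset.sum_congr rfl fun v _ => ?_
    rw [← hnetadd]; ring)
  set w : ι → ZMod 3 := fun e => if e ∈ F then x e else y e with hwdef
  have hwF : ∀ e ∈ F, x e = w e := fun e he => by simp [hwdef, he]
  have hwT' : ∀ e ∈ inE E g T, y e = w e := fun e he => by
    have : e ∉ F := fun h1 => (Finset.mem_sdiff.1 h1).2 he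
    simp [hwdef, this]
  refine ⟨w, sol_glue hw ha (fun e he => ?_) (hx.congr fun e he => hwF e (hqF e he)) fun v hv => ?_⟩
  · by_cases h1 : e ∈ F
    · rw [← hwF e h1]; exact hx.1 e (hFq e h1)
    · have : e ∈ inE E g T := by
        by_contra h2; exact h1 (Finset.mem_sdiff.2 ⟨he, h2⟩)
      rw [← hwT' e this]; exact hy.1 e this
  · have h1 := hy.2 v hv
    rw [← hnetadd, ← net_congr (x := x) (fun e he _ => hwF e he),
      ← net_congr (x := y) (fun e he _ => hwT' e he), h1]
    ring

/-! ### Vertices of degree five -/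

/-- A vertex `v` of degree `5` is removed by lifting two of its edges and using the other three
to meet its demand. -/
lemma step_degree_five {S : Finset V} {E : Finset ι} {g : ι → V × V} {β : V → ZMod 3}
    (hw : Wf S E g) (hβ : ∑ v ∈ S, β v = 0)
    (hdef : ∀ T ⊆ S, T.Nonempty → T ≠ S → (inE E g T).card + cz T.card + 4 ≤ 4 * T.card)
    (hpar : ∀ e ∈ E, ∀ e' ∈ E, e ≠ e' → ∀ a b, a ≠ b → At (g e) a → At (g e) b →
      At (g e') a → At (g e') b → False)
    (hE : 4 * S.card ≤ E.card + cz S.card + 3) (hn : 6 ≤ S.card) {v : V} (hv : v ∈ S)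
    (hd : deg E g {v} = 5)
    (ih : ∀ (E' : Finset ι) (g' : ι → V × V) (β' : V → ZMod 3), Wf (S.erase v) E' g' →
      ∑ u ∈ S.erase v, β' u = 0 → Zc (S.erase v) E' g' → ∃ x, Sol (S.erase v) E' g' β' x) :
    ∃ x, Sol S E g β x := by
  have hl : ∀ e ∈ E, (g e).1 ≠ (g e).2 := fun e he => (hw e he).2.2
  set F := E.filter (fun e => At (g e) v) with hF
  have hF5 : F.card = 5 := by rw [hF, ← deg_singleton hw, hd]
  obtain ⟨e₁, he1F, e₂, he2F, h12⟩ := Finset.one_lt_card.1 (show 1 < F.card by omega)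
  obtain ⟨he1, hv1⟩ := Finset.mem_filter.1 he1F
  obtain ⟨he2, hv2⟩ := Finset.mem_filter.1 he2F
  set y₁ := oth (g e₁) v with hy1
  set y₂ := oth (g e₂) v with hy2
  have hy1v : y₁ ≠ v := oth_ne (hl _ he1)
  have hy2v : y₂ ≠ v := oth_ne (hl _ he2)
  have hy1S : y₁ ∈ S.erase v := Finset.mem_erase.2 ⟨hy1v, oth_mem (hw _ he1).1 (hw _ he1).2.1⟩
  have hy2S : y₂ ∈ S.erase v := Finset.mem_erase.2 ⟨hy2v, oth_mem (hw _ he2).1 (hw _ he2).2.1⟩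
  have hy12 : y₁ ≠ y₂ := fun h =>
    hpar e₁ he1 e₂ he2 h12 v y₁ hy1v.symm hv1 (at_oth _ _) hv2 (h ▸ at_oth _ _)
  set F₃ := (F.erase e₁).erase e₂ with hF3
  have hF3c : F₃.card = 3 := by
    rw [hF3, Finset.card_erase_of_mem (Finset.mem_erase.2 ⟨h12.symm, he2F⟩),
      Finset.card_erase_of_mem he1F, hF5]
  have hF3F : F₃ ⊆ F := (Finset.erase_subset _ _).trans (Finset.erase_subset _ _)
  have hF3E : F₃ ⊆ E := hF3F.trans (Finset.filter_subset _ _)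
  obtain ⟨e₃, he3, e₄, he4, h34⟩ := Finset.one_lt_card.1 (show 1 < F₃.card by omega)
  have hatF : ∀ e ∈ F₃, inc (g e) v ≠ 0 := fun e he =>
    inc_ne_zero_of_at (Finset.mem_filter.1 (hF3F he)).2 (hl e (hF3E he))
  obtain ⟨y, hy, hynet, -⟩ := exists_net_eq he3 he4 h34 (hatF _ he3) (hatF _ he4)
    (fun _ => 1) (fun _ _ => one_ne_zero) (β v)
  have h1F3 : e₁ ∉ F₃ := by simp [hF3]
  have h2F3 : e₂ ∉ F₃ := by simp [hF3]
  have he1' : e₁ ∈ E \ F₃ := Finset.mem_sdiff.2 ⟨he1, h1F3⟩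
  have he2' : e₂ ∈ E \ F₃ := Finset.mem_sdiff.2 ⟨he2, h2F3⟩
  set E' := (E \ F₃).erase e₂ with hE'
  set g' := Function.update g e₁ (y₁, y₂) with hg'
  have hg'1 : g' e₁ = (y₁, y₂) := by simp [hg']
  have hg'i : ∀ i, i ≠ e₁ → g' i = g i := fun i hi => Function.update_of_ne hi _ _
  have hE'E : ∀ i ∈ E', i ∈ E ∧ i ≠ e₂ ∧ i ∉ F₃ := by
    intro i hi
    rw [hE', Finset.mem_erase, Finset.mem_sdiff] at hi
    exact ⟨hi.2.1, hi.1, hi.2.2⟩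
  have hoff : ∀ i ∈ E', ¬ At (g' i) v := by
    intro i hi
    obtain ⟨h1, h2, h3⟩ := hE'E i hi
    by_cases hi1 : i = e₁
    · subst hi1; rw [hg'1]; rintro (h | h)
      · exact hy1v h
      · exact hy2v h
    · rw [hg'i i hi1]; intro h
      exact h3 (Finset.mem_erase.2 ⟨h2, Finset.mem_erase.2 ⟨hi1, Finset.mem_filter.2 ⟨h1, h⟩⟩⟩)
  have hwf : Wf (S.erase v) E' g' := by
    refine wf_erase (fun i hi => ?_) hoff
    by_cases hi1 : i = e₁
    · subst hi1; rw [hg'1]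
      exact ⟨Finset.mem_of_mem_erase hy1S, Finset.mem_of_mem_erase hy2S, hy12⟩
    · rw [hg'i i hi1]; exact hw i (hE'E i hi).1
  have hβv : β v - net F₃ g y v = 0 := by rw [hynet, sub_self]
  have hsum : ∑ u ∈ S.erase v, (β u - net F₃ g y u) = 0 := by
    have h1 : ∑ u ∈ S, (β u - net F₃ g y u) = 0 := by
      rw [Finset.sum_sub_distrib, hβ, sum_net_eq_zero (fun e he => hw e (hF3E he)), sub_zero]
    rwa [← Finset.add_sum_erase _ _ hv, hβv, zero_add] at h1
  have hcard : (S.erase v).card + 1 = S.card := Finset.card_erase_add_one hv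
  have hzc : Zc (S.erase v) E' g' := by
    intro φ hk
    set T := S.erase v with hT
    have hb := class_bound (E := E) (g := g) (T := T) (φ := φ) (fun w hw => by
      obtain ⟨u, hu, rfl⟩ := Finset.mem_image.1 hw
      refine hdef _ ((Finset.filter_subset _ _).trans (Finset.erase_subset _ _))
        ⟨u, Finset.mem_filter.2 ⟨hu, rfl⟩⟩ fun h => ?_
      rw [← h] at hv
      exact Finset.ne_of_mem_erase (Finset.mem_filter.1 hv).1 rfl)
    have hsplit := card_split hw {v}
    rw [hd, Finset.sdiff_singleton_eq_erase, ← hT] at hsplit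
    have hsingle := hdef {v} (by simpa using hv) (Finset.singleton_nonempty v) (by
      intro h; rw [← h, Finset.card_singleton] at hn; omega)
    rw [Finset.card_singleton] at hsingle
    rw [cz_four (show 4 ≤ S.card by omega)] at hE
    have hq0 : quoE (inE E g T) g φ ⊆ quoE E' g' φ := by
      intro i hi
      obtain ⟨h1, h2⟩ := Finset.mem_filter.1 hi
      obtain ⟨h3, h4, h5⟩ := mem_inE.1 h1
      have h6 : i ∉ F := by
        intro h6
        rcases (Finset.mem_filter.1 h6).2 with h7 | h7
        · exact Finset.ne_of_mem_erase h4 h7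
        · exact Finset.ne_of_mem_erase h5 h7
      have hi1 : i ≠ e₁ := by rintro rfl; exact h6 he1F
      have hi2 : i ≠ e₂ := by rintro rfl; exact h6 he2F
      refine Finset.mem_filter.2 ⟨Finset.mem_erase.2 ⟨hi2, Finset.mem_sdiff.2 ⟨h3,
        fun h7 => h6 (hF3F h7)⟩⟩, ?_⟩
      rw [hg'i i hi1]; exact h2
    have hq := Finset.card_le_card hq0
    have hclass : ∀ r, 1 ≤ r → r * (T.image φ).card < T.card →
        cz (r + 1) ≤ ∑ w ∈ T.image φ, cz (T.filter (fun v => φ v = w)).card := by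
      intro r hr h1
      obtain ⟨w, hw, hw2⟩ := exists_class h1
      refine le_trans ?_ (class_le_sum φ hw)
      unfold cz; split_ifs <;> omega
    rcases (show (T.image φ).card = 2 ∨ (T.image φ).card = 3 ∨ 4 ≤ (T.image φ).card by omega)
      with hk2 | hk3 | hk4
    · have h1 := hclass 2 (by omega) (by omega)
      rw [show cz (2 + 1) = 5 by simp [cz]] at h1
      rw [hk2] at hb ⊢
      rw [show cz 2 = 3 by simp [cz]]
      omega
    · have h1 := hclass 1 (by omega) (by omega)
      rw [show cz (1 + 1) = 3 by simp [cz]] at h1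
      rw [hk3] at hb ⊢
      rw [show cz 3 = 5 by simp [cz]]
      omega
    -- for `k ≥ 4` the count is one edge short: either `y₁`, `y₂` share a class, which improves
    -- `class_bound`, or the lifted edge survives the identification
    · rw [cz_four hk4]
      by_cases hφ : φ y₁ = φ y₂
      · have h1 := class_le_sum φ (Finset.mem_image_of_mem φ hy1S)
        have h2 : 2 ≤ (T.filter (fun u => φ u = φ y₁)).card :=
          Finset.one_lt_card.2 ⟨y₁, Finset.mem_filter.2 ⟨hy1S, rfl⟩, y₂,
            Finset.mem_filter.2 ⟨hy2S, hφ.symm⟩, hy12⟩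
        have h3 := cz_two h2
        omega
      · have h1 : e₁ ∈ quoE E' g' φ := by
          refine Finset.mem_filter.2 ⟨Finset.mem_erase.2 ⟨h12, he1'⟩, ?_⟩
          rw [hg'1]; exact hφ
        have h2 : e₁ ∉ quoE (inE E g T) g φ := by
          intro h2
          obtain ⟨-, h4, h5⟩ := mem_inE.1 (Finset.mem_filter.1 h2).1
          rcases hv1 with h7 | h7
          · exact Finset.ne_of_mem_erase h4 h7
          · exact Finset.ne_of_mem_erase h5 h7
        have h3 := Finset.card_le_card (Finset.insert_subset h1 hq0)
        rw [Finset.card_insert_of_notMem h2] at h3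
        omega
  obtain ⟨x, hx⟩ := ih E' g' (fun u => β u - net F₃ g y u) hwf hsum hzc
  obtain ⟨x', hx', -⟩ := sol_lift he1' he2' h12 hv1 hv2 hy1v hy2v (sol_isolated hoff hβv hx)
  exact ⟨_, sol_fix hF3E hy hx'⟩

/-! ### The flow theorem for dense multigraphs -/

/-- A multigraph satisfying `Zc` has a nowhere-zero `ℤ₃`-flow for every boundary. -/
theorem sol_of_zc {S : Finset V} {E : Finset ι} {g : ι → V × V} {β : V → ZMod 3} {z : V}
    (hz : z ∉ S) (hS : S.Nonempty) (hw : Wf S E g) (hβ : ∑ v ∈ S, β v = 0) (hzc : Zc S E g) :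
    ∃ x, Sol S E g β x := by
  induction hn : S.card using Nat.strong_induction_on generalizing S E g β with
  | _ n ih =>
  subst hn
  have hpos := Finset.card_pos.2 hS
  by_cases h1 : S.card = 1
  · obtain ⟨v, rfl⟩ := Finset.card_eq_one.1 h1
    refine ⟨fun _ => 1, sol_of_erase hw hβ (fun _ _ => one_ne_zero) (Finset.mem_singleton_self v)
      fun u hu huv => ?_⟩
    exact absurd (Finset.mem_singleton.1 hu) huv
  have hEid : 4 * S.card ≤ E.card + cz S.card + 3 := by
    have h2 := hzc id (by rw [Finset.image_id]; omega)
    rw [Finset.image_id] at h2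
    have h3 := Finset.card_le_card (show quoE E g id ⊆ E from Finset.filter_subset _ _)
    omega
  by_cases h2 : S.card = 2
  · obtain ⟨a, b, hab, rfl⟩ := Finset.card_eq_two.1 h2
    rw [h2, show cz 2 = 3 by simp [cz]] at hEid
    obtain ⟨e, he, e', he', hne⟩ := Finset.one_lt_card.1 (show 1 < E.card by omega)
    have hinc : ∀ i ∈ E, inc (g i) a ≠ 0 := by
      intro i hi
      obtain ⟨h3, h4, h5⟩ := hw i hi
      refine inc_ne_zero_of_at ?_ h5
      simp only [Finset.mem_insert, Finset.mem_singleton] at h3 h4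
      unfold At
      by_contra hcon
      push Not at hcon
      exact h5 ((h3.resolve_left hcon.1).trans (h4.resolve_left hcon.2).symm)
    obtain ⟨x, hx, hxa, -⟩ := exists_net_eq he he' hne (hinc e he) (hinc e' he') (fun _ => 1)
      (fun _ _ => one_ne_zero) (β a)
    refine ⟨x, sol_of_erase hw hβ hx (a := b) (by simp) fun v hv hvb => ?_⟩
    simp only [Finset.mem_insert, Finset.mem_singleton] at hv
    rw [hv.resolve_right hvb, hxa]
  have h3 : 3 ≤ S.card := by omega
  -- a proper subset `T` with property `Zc` is contracted, and the flow extended inside `T`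
  by_cases hT : ∃ T ⊆ S, 2 ≤ T.card ∧ T ≠ S ∧ Zc T (inE E g T) g
  · obtain ⟨T, hTS, hT2, hTne, hTzc⟩ := hT
    obtain ⟨a, ha⟩ : T.Nonempty := Finset.card_pos.1 (by omega)
    have hsub : S.image (con T a) ⊆ S := by
      intro w hw
      obtain ⟨v, hv, rfl⟩ := Finset.mem_image.1 hw
      unfold con; split_ifs
      · exact hTS ha
      · exact hv
    obtain ⟨x, hx⟩ := ih _ (card_con_lt (a := a) hTS hT2) (fun h => hz (hsub h))
      ⟨_, Finset.mem_image_of_mem _ (hTS ha)⟩ (wf_quo hw _)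
      (by rw [sum_push_image, hβ]) (hzc.quo (con T a)) (β := push S (con T a) β) rfl
    refine sol_extend hw hTS ha (fun γ hγ => ?_) hx
    exact ih _ (Finset.card_lt_card (hTS.ssubset_of_ne hTne)) (fun h => hz (hTS h)) ⟨a, ha⟩
      (fun e he => ⟨(mem_inE.1 he).2.1, (mem_inE.1 he).2.2, (hw e (mem_inE.1 he).1).2.2⟩)
      hγ hTzc rfl
  push Not at hT
  have hdef : ∀ T ⊆ S, T.Nonempty → T ≠ S → (inE E g T).card + cz T.card + 4 ≤ 4 * T.card := by
    intro T hTS hne hTne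
    refine deficiency (fun e he => (hw e he).2.2) hne fun T' hT' h4 => hT T' (hT'.trans hTS) h4 ?_
    rintro rfl
    exact hTne (hTS.antisymm hT')
  have hpar : ∀ e ∈ E, ∀ e' ∈ E, e ≠ e' → ∀ a b, a ≠ b → At (g e) a → At (g e) b →
      At (g e') a → At (g e') b → False := by
    intro e he e' he' hne a b hab h4 h5 h6 h7
    have hab2 := Finset.card_pair hab
    have hends : ∀ i ∈ E, At (g i) a → At (g i) b → i ∈ inE E g {a, b} := by
      intro i hi h8 h9
      have h10 := hw i hi
      rw [at_iff h8] at h9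
      rw [mem_inE]
      refine ⟨hi, ?_⟩
      have h11 := h9.resolve_left hab.symm
      rcases oth_eq h8 with h12 | h12 <;> rw [h12, ← h11] <;> simp
    have h8 := hdef {a, b} (by
      intro u hu
      rcases Finset.mem_insert.1 hu with rfl | hu
      · exact at_mem (hw e he).1 (hw e he).2.1 h4
      · rw [Finset.mem_singleton.1 hu]; exact at_mem (hw e he).1 (hw e he).2.1 h5)
      ⟨a, by simp⟩ (by intro h; rw [h] at hab2; omega)
    rw [hab2, show cz 2 = 3 by simp [cz]] at h8
    have h9 := Finset.one_lt_card.2 ⟨e, hends e he h4 h5, e', hends e' he' h6 h7, hne⟩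
    omega
  have hsingle : ∀ v, (inE E g {v}).card = 0 := by
    intro v
    refine Finset.card_eq_zero.2 (Finset.eq_empty_of_forall_notMem fun e he => ?_)
    obtain ⟨h4, h5, h6⟩ := mem_inE.1 he
    rw [Finset.mem_singleton] at h5 h6
    exact (hw e h4).2.2 (h5.trans h6.symm)
  have hdeg : ∀ v ∈ S, 5 + cz (S.card - 1) ≤ deg E g {v} + cz S.card := by
    intro v hv
    have h4 := card_split hw {v}
    rw [Finset.sdiff_singleton_eq_erase, hsingle] at h4
    have h5 := Finset.card_erase_of_mem hv
    have h6 := hdef (S.erase v) (Finset.erase_subset _ _) (Finset.card_pos.1 (by omega))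
      (fun h => by rw [h] at h5; omega)
    rw [h5] at h6
    omega
  have hdeg' : ∀ v ∈ S, deg E g {v} + 1 ≤ S.card := by
    intro v hv
    rw [deg_singleton hw, ← Finset.card_erase_add_one hv, Nat.add_le_add_iff_right]
    refine Finset.card_le_card_of_injOn (fun e => oth (g e) v) ?_ ?_
    · intro e he
      obtain ⟨h4, h5⟩ := Finset.mem_filter.1 he
      exact Finset.mem_erase.2 ⟨oth_ne (hw e h4).2.2, oth_mem (hw e h4).1 (hw e h4).2.1⟩
    · intro e he e' he' h
      obtain ⟨h4, h5⟩ := Finset.mem_filter.1 he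
      obtain ⟨h6, h7⟩ := Finset.mem_filter.1 he'
      by_contra hne
      exact hpar e h4 e' h6 hne v (oth (g e) v) (oth_ne (hw e h4).2.2).symm h5 (at_oth _ _) h7
        (by simp only at h; rw [h]; exact at_oth _ _)
  have hn : 6 ≤ S.card := by
    obtain ⟨v, hv⟩ := hS
    have h4 := hdeg v hv
    have h5 := hdeg' v hv
    by_contra hlt
    rcases (show S.card = 3 ∨ S.card = 4 ∨ S.card = 5 by omega) with h6 | h6 | h6 <;>
      rw [h6] at h4 h5 <;> simp [cz] at h4 <;> omega
  rw [cz_four (show 4 ≤ S.card by omega), cz_four (show 4 ≤ S.card - 1 by omega)] at hdeg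
  by_cases h6 : ∀ v ∈ S, 6 ≤ deg E g {v}
  · -- the extension theorem applies after adding the isolated vertex `z`
    have hzE : ∀ e ∈ E, ¬ At (g e) z := fun e he h4 => hz (at_mem (hw e he).1 (hw e he).2.1 h4)
    have hdz : deg E g {z} = 0 := by
      rw [deg_singleton hw, Finset.filter_false_of_mem hzE, Finset.card_empty]
    have herase : (insert z S).erase z = S := Finset.erase_insert hz
    have hSz : ∀ v ∈ S, (if v = z then 0 else β v) = β v := by
      intro v hv; rw [if_neg (by rintro rfl; exact hz hv)]
    have hyp : Hyp (insert z S) E g (fun v => if v = z then 0 else β v) z (fun _ => 1) :=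
      { z_mem := Finset.mem_insert_self _ _
        wf := fun e he => ⟨Finset.mem_insert_of_mem (hw e he).1,
          Finset.mem_insert_of_mem (hw e he).2.1, (hw e he).2.2⟩
        sum := by rw [Finset.sum_insert hz, Finset.sum_congr rfl hSz, hβ]; simp
        nz := fun _ _ => one_ne_zero
        net_z := by rw [net_eq_zero_of_isolated hzE]; simp
        low := by rw [hdz]; left; omega
        good := by
          rw [herase]
          intro A hA hA1 hA2
          left
          have hcomp := Finset.card_sdiff_add_card_eq_card hA
          have hlt := Finset.card_lt_card (hA.ssubset_of_ne hA2)
          have hpos := Finset.card_pos.2 hA1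
          by_cases h7 : A.card = 1
          · obtain ⟨v, rfl⟩ := Finset.card_eq_one.1 h7
            exact h6 v (hA (Finset.mem_singleton_self v))
          by_cases h8 : (S \ A).card = 1
          · obtain ⟨v, hv⟩ := Finset.card_eq_one.1 h8
            rw [← deg_compl hw, hv]
            exact h6 v (Finset.sdiff_subset (hv ▸ Finset.mem_singleton_self v))
          have h9 := card_split hw A
          have h10 := hdef A hA hA1 hA2
          have h11 := hdef (S \ A) Finset.sdiff_subset (Finset.card_pos.1 (by omega))
            (fun h => by rw [h] at hcomp; omega)
          have h12 := cz_two (show 2 ≤ A.card by omega)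
          have h13 := cz_two (show 2 ≤ (S \ A).card by omega)
          rw [cz_four (show 4 ≤ S.card by omega)] at hEid
          by_contra h14
          rcases (show 3 ≤ A.card ∨ 3 ≤ (S \ A).card by omega) with h15 | h15
          · have := cz_three h15
            omega
          · have := cz_three h15
            omega }
    obtain ⟨x, hx, -⟩ := ext_of_hyp hyp
    exact ⟨x, hx.1, fun v hv => (hx.2 v (Finset.mem_insert_of_mem hv)).trans (hSz v hv)⟩
  · push Not at h6
    obtain ⟨v, hv, hv6⟩ := h6
    have h7 := hdeg v hv
    have h8 := Finset.card_erase_of_mem hv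
    refine step_degree_five hw hβ hdef hpar hEid hn hv (by omega)
      fun E' g' β' hw' hβ' hzc' => ?_
    exact ih _ (Finset.card_erase_lt_of_mem hv) (fun h => hz (Finset.mem_of_mem_erase h))
      (Finset.card_pos.1 (by omega)) hw' hβ' hzc' rfl

/-! ### Translation between simple graphs and edge-labelled multigraphs -/

/-- The vertex set `V` with one additional vertex `pt`, which serves as a vertex outside the
graph. -/
inductive AddPt (V : Type) : Type
  | of : V → AddPt V
  | pt : AddPt V

lemma AddPt.of_injective : Function.Injective (AddPt.of : V → AddPt V) := fun _ _ h => AddPt.of.inj h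

lemma AddPt.exists_of_ne {o : AddPt V} (h : o ≠ AddPt.pt) : ∃ v, o = AddPt.of v := by
  cases o with
  | of v => exact ⟨v, rfl⟩
  | pt => exact absurd rfl h

/-- An injective ranking of the vertices, used to orient the edges. -/
def rk [Fintype V] (v : V) : ℕ := (Fintype.equivFin V v : ℕ)

lemma rk_inj [Fintype V] {u v : V} (h : rk u = rk v) : u = v :=
  (Fintype.equivFin V).injective (Fin.ext h)

/-- The edges of `G`, each one listed as the pair of its ends in increasing rank. -/
def edg [Fintype V] (G : SimpleGraph V) : Finset (V × V) :=
  Finset.univ.filter (fun p => G.Adj p.1 p.2 ∧ rk p.1 < rk p.2)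

lemma mem_edg [Fintype V] {G : SimpleGraph V} {p : V × V} :
    p ∈ edg G ↔ G.Adj p.1 p.2 ∧ rk p.1 < rk p.2 := by
  unfold edg; rw [Finset.mem_filter]; simp

/-- The ends of an edge, as vertices of `AddPt V`. -/
def ends (p : V × V) : AddPt V × AddPt V := (AddPt.of p.1, AddPt.of p.2)

/-- The vertex set of the graph inside `AddPt V`. -/
def vts [Fintype V] : Finset (AddPt V) := Finset.univ.image AddPt.of

lemma mem_vts [Fintype V] (v : V) : AddPt.of v ∈ (vts : Finset (AddPt V)) :=
  Finset.mem_image_of_mem _ (Finset.mem_univ v)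

lemma pt_notMem_vts [Fintype V] : AddPt.pt ∉ (vts : Finset (AddPt V)) := by
  simp [vts]

lemma card_vts [Fintype V] : (vts : Finset (AddPt V)).card = Fintype.card V :=
  Finset.card_image_of_injective _ (AddPt.of_injective)

lemma wf_edg [Fintype V] (G : SimpleGraph V) : Wf vts (edg G) ends := by
  intro p hp
  refine ⟨mem_vts _, mem_vts _, fun h => ?_⟩
  exact (mem_edg.1 hp).1.ne (AddPt.of_injective h)

lemma card_edg [Fintype V] (G : SimpleGraph V) : (edg G).card = Nat.card G.edgeSet := by
  rw [Nat.card_coe_set_eq, ← Set.ncard_coe_finset]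
  refine Set.ncard_congr (fun p _ => s(p.1, p.2)) (fun p hp => ?_) (fun p q hp hq h => ?_)
    fun e he => ?_
  · exact (mem_edg.1 hp).1
  · have h1 := (mem_edg.1 hp).2
    have h2 := (mem_edg.1 hq).2
    rcases Sym2.eq_iff.1 h with ⟨h3, h4⟩ | ⟨h3, h4⟩
    · exact Prod.ext h3 h4
    · rw [h3, h4] at h1; omega
  · induction e using Sym2.ind with
    | _ u v =>
    have hadj : G.Adj u v := he
    rcases lt_trichotomy (rk u) (rk v) with h | h | h
    · exact ⟨(u, v), mem_edg.2 ⟨hadj, h⟩, rfl⟩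
    · exact absurd (rk_inj h) hadj.ne
    · exact ⟨(v, u), mem_edg.2 ⟨hadj.symm, h⟩, Sym2.eq_swap⟩

lemma net_edg [Fintype V] (G : SimpleGraph V) (f : V → V → ZMod 3)
    (hf : ∀ u v, G.Adj u v → f u v = - f v u) (w : V) :
    net (edg G) ends (fun p => f p.1 p.2) (AddPt.of w)
      = ∑ v ∈ Finset.univ.filter (fun v => G.Adj w v), f w v := by
  unfold net edg
  have h1 : ∀ p : V × V, (f p.1 p.2 * inc (ends p) (AddPt.of w) : ZMod 3)
      = (if p.1 = w then f p.1 p.2 else 0) - (if p.2 = w then f p.1 p.2 else 0) := by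
    intro p
    simp only [inc, ends, AddPt.of.injEq, mul_sub, mul_ite, mul_one, mul_zero]
  rw [Finset.sum_congr rfl (fun p _ => h1 p), Finset.sum_sub_distrib, Finset.sum_filter,
    Finset.sum_filter, Fintype.sum_prod_type, Fintype.sum_prod_type_right, Finset.sum_filter]
  have h2 : ∀ u : V, (∑ v : V, if G.Adj u v ∧ rk u < rk v then (if u = w then f u v else 0) else 0)
      = if u = w then ∑ v : V, (if G.Adj w v ∧ rk w < rk v then f w v else 0) else 0 := by
    intro u
    split_ifs with h
    · subst h; rfl
    · simp
  have h3 : ∀ u : V, (∑ v : V, if G.Adj v u ∧ rk v < rk u then (if u = w then f v u else 0) else 0)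
      = if u = w then ∑ v : V, (if G.Adj v w ∧ rk v < rk w then f v w else 0) else 0 := by
    intro u
    split_ifs with h
    · subst h; rfl
    · simp
  rw [Finset.sum_congr rfl (fun u _ => h2 u), Finset.sum_congr rfl (fun u _ => h3 u),
    Finset.sum_ite_eq', Finset.sum_ite_eq']
  simp only [Finset.mem_univ, if_true]
  rw [← Finset.sum_sub_distrib]
  refine Finset.sum_congr rfl fun v _ => ?_
  by_cases hadj : G.Adj w v
  · rcases lt_trichotomy (rk w) (rk v) with h | h | h
    · simp [hadj, h, hadj.symm, h.le]
    · exact absurd (rk_inj h) hadj.ne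
    · simp [hadj, h, hadj.symm, h.le, hf w v hadj]
  · have : ¬ G.Adj v w := fun h => hadj h.symm
    simp [hadj, this]

/-- A flow on the oriented edges, made antisymmetric, is a flow of the graph. -/
lemma hasNZFlow_of_sol [Fintype V] [DecidableEq V] {G : SimpleGraph V} {x : V × V → ZMod 3}
    (hx : Sol vts (edg G) ends (fun _ => 0) x) : HasNZFlow G (fun _ => (0 : ZMod 3)) := by
  have hanti : ∀ u v, G.Adj u v → (if rk u < rk v then x (u, v) else - x (v, u))
      = - (if rk v < rk u then x (v, u) else - x (u, v)) := by
    intro u v hadj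
    rcases lt_trichotomy (rk u) (rk v) with h | h | h
    · simp [h, h.not_gt]
    · exact absurd (rk_inj h) hadj.ne
    · simp [h, h.not_gt]
  refine ⟨fun u v => if rk u < rk v then x (u, v) else - x (v, u), hanti, fun u v hadj => ?_,
    fun u => ?_⟩
  · rcases lt_trichotomy (rk u) (rk v) with h | h | h
    · simpa [h] using hx.1 (u, v) (mem_edg.2 ⟨hadj, h⟩)
    · exact absurd (rk_inj h) hadj.ne
    · simpa [h.not_gt] using hx.1 (v, u) (mem_edg.2 ⟨hadj.symm, h⟩)
  · have h1 := net_edg G (fun u v => if rk u < rk v then x (u, v) else - x (v, u)) hanti u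
    have h2 := hx.2 (AddPt.of u) (mem_vts u)
    have h3 : net (edg G) ends (fun p => if rk p.1 < rk p.2 then x (p.1, p.2) else - x (p.2, p.1))
        (AddPt.of u) = net (edg G) ends x (AddPt.of u) :=
      net_congr fun e he _ => by simp [(mem_edg.1 he).2]
    exact h1.symm.trans (h3.trans h2)

/-- A flow of `G/P` is a flow of the multigraph obtained by the identification `φ`, where the
parts of `P` are the classes of `φ`. -/
lemma sol_of_quot [Fintype V] [DecidableEq V] {G : SimpleGraph V} (φ : AddPt V → AddPt V)
    (h : HasNZFlowQuot G (fun _ => (0 : ZMod 3)) (Setoid.ker (fun v => φ (AddPt.of v)))) :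
    ∃ x, Sol (vts.image φ) (quoE (edg G) ends φ) (mapE ends φ) (push vts φ (fun _ => 0)) x := by
  obtain ⟨f, hanti, hnz, hsum⟩ := h
  have hr : ∀ u v : V, (Setoid.ker (fun v => φ (AddPt.of v))).r u v ↔ φ (AddPt.of u) = φ (AddPt.of v) :=
    fun u v => Iff.rfl
  simp only [hr] at hanti hnz hsum
  set f' : V → V → ZMod 3 := fun u v => if φ (AddPt.of u) = φ (AddPt.of v) then 0 else f u v with hf'
  have hanti' : ∀ u v, G.Adj u v → f' u v = - f' v u := by
    intro u v hadj
    by_cases h : φ (AddPt.of u) = φ (AddPt.of v)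
    · simp [hf', h]
    · have h' : ¬ φ (AddPt.of v) = φ (AddPt.of u) := fun h1 => h h1.symm
      simp [hf', h, h', hanti u v hadj h]
  refine ⟨fun p => f' p.1 p.2, fun p hp => ?_, fun w hw => ?_⟩
  · obtain ⟨h1, h2⟩ := Finset.mem_filter.1 hp
    have h2' : ¬ φ (AddPt.of p.1) = φ (AddPt.of p.2) := h2
    simpa [hf', h2'] using hnz _ _ (mem_edg.1 h1).1 h2'
  · obtain ⟨o, ho, rfl⟩ := Finset.mem_image.1 hw
    obtain ⟨y, -, rfl⟩ := Finset.mem_image.1 ho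
    rw [net_quo (wf_edg G)]
    have h0 : push (vts : Finset (AddPt V)) φ (fun _ => 0) (φ (AddPt.of y)) = 0 := by
      unfold push; exact Finset.sum_const_zero
    rw [h0]
    have h1 := hsum y
    rw [Finset.sum_const_zero] at h1
    rw [← h1]
    unfold push vts
    rw [Finset.sum_filter, Finset.sum_image (fun _ _ _ _ h => AddPt.of_injective h),
      Finset.sum_filter]
    refine Finset.sum_congr rfl fun u _ => ?_
    congr 1
    rw [net_edg G f' hanti', Finset.sum_filter, Finset.sum_filter]
    refine Finset.sum_congr rfl fun v _ => ?_
    by_cases ha : G.Adj u v <;> by_cases hb : φ (AddPt.of u) = φ (AddPt.of v) <;> simp [hf', ha, hb]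

/-- A set with property `Zc` induces a connected subgraph. -/
lemma connected_of_zc [Fintype V] {G : SimpleGraph V} {T : Finset (AddPt V)}
    (hT : ∀ o ∈ T, o ≠ AddPt.pt) (h2 : 2 ≤ T.card) (hz : Zc T (inE (edg G) ends T) ends) :
    (G.induce {v | AddPt.of v ∈ T}).Connected := by
  obtain ⟨o, ho⟩ : T.Nonempty := Finset.card_pos.1 (by omega)
  obtain ⟨u, rfl⟩ := AddPt.exists_of_ne (hT o ho)
  refine SimpleGraph.connected_iff_exists_forall_reachable _ |>.2 ⟨⟨u, ho⟩, ?_⟩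
  by_contra hcon
  push Not at hcon
  obtain ⟨⟨v, hv⟩, huv⟩ := hcon
  set R : V → Prop := fun v => ∃ hv : AddPt.of v ∈ T,
    (G.induce {v | AddPt.of v ∈ T}).Reachable ⟨u, ho⟩ ⟨v, hv⟩ with hR
  -- the two sides of the separation
  set φ : AddPt V → AddPt V := fun o => if ∃ v, o = AddPt.of v ∧ R v then AddPt.of u else AddPt.pt with hφ
  have h1 : φ (AddPt.of u) = AddPt.of u := by
    have : ∃ v, AddPt.of u = AddPt.of v ∧ R v := ⟨u, rfl, ho, SimpleGraph.Reachable.refl _⟩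
    simp only [hφ, this, if_true]
  have h3 : φ (AddPt.of v) = AddPt.pt := by
    have : ¬ ∃ w, AddPt.of v = AddPt.of w ∧ R w := by
      rintro ⟨w, hw, hw', hw2⟩
      obtain rfl := AddPt.of_injective hw
      exact huv hw2
    simp only [hφ, this, if_false]
  have hsub : T.image φ = {AddPt.of u, AddPt.pt} := by
    ext w
    rw [Finset.mem_image, Finset.mem_insert, Finset.mem_singleton]
    constructor
    · rintro ⟨o, -, rfl⟩
      simp only [hφ]
      split_ifs <;> simp
    · rintro (rfl | rfl)
      · exact ⟨_, ho, h1⟩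
      · exact ⟨_, hv, h3⟩
  have hcard : (T.image φ).card = 2 := by
    rw [hsub]; exact Finset.card_pair (by simp)
  have hstep : ∀ a b : V, AddPt.of a ∈ T → AddPt.of b ∈ T → G.Adj a b → R a → R b := by
    rintro a b ha hb hab ⟨ha', h⟩
    refine ⟨hb, h.trans (SimpleGraph.Adj.reachable ?_)⟩
    exact hab
  have hφs : ∀ a : V, φ (AddPt.of a) = if R a then AddPt.of u else AddPt.pt := by
    intro a
    have : (∃ v, AddPt.of a = AddPt.of v ∧ R v) ↔ R a := by
      constructor
      · rintro ⟨v, h, hv⟩; obtain rfl := AddPt.of_injective h; exact hv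
      · exact fun h => ⟨a, rfl, h⟩
    simp only [hφ, this]
  have hempty : quoE (inE (edg G) ends T) ends φ = ∅ := by
    refine Finset.eq_empty_of_forall_notMem fun p hp => ?_
    obtain ⟨h4, h5⟩ := Finset.mem_filter.1 hp
    obtain ⟨h6, h7, h8⟩ := mem_inE.1 h4
    have hadj := (mem_edg.1 h6).1
    refine h5 ?_
    change φ (AddPt.of p.1) = φ (AddPt.of p.2)
    have : R p.1 ↔ R p.2 := ⟨hstep _ _ h7 h8 hadj, hstep _ _ h8 h7 hadj.symm⟩
    rw [hφs, hφs]; simp only [this]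
  have := hz φ (by rw [hcard])
  rw [hcard, hempty] at this
  simp [cz] at this

/-- In a flow-critical graph, no vertex set has property `Zc`. -/
lemma not_zc [Fintype V] [DecidableEq V] {G : SimpleGraph V}
    (hcrit : FlowCritical G (fun _ => (0 : ZMod 3))) {T : Finset (AddPt V)} (hTS : T ⊆ vts)
    (h2 : 2 ≤ T.card) : ¬ Zc T (inE (edg G) ends T) ends := by
  intro hz
  obtain ⟨-, -, hno, hall⟩ := hcrit
  have hT : ∀ o ∈ T, o ≠ AddPt.pt := fun o ho h => pt_notMem_vts (hTS (h ▸ ho))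
  obtain ⟨a, ha, b, hb, hab⟩ := Finset.one_lt_card.1 (show 1 < T.card by omega)
  obtain ⟨u, rfl⟩ := AddPt.exists_of_ne (hT a ha)
  obtain ⟨v, rfl⟩ := AddPt.exists_of_ne (hT b hb)
  have hcon := connected_of_zc hT h2 hz
  -- the partition with `T` as its only nontrivial part
  have hq := hall (Setoid.ker (fun w => con T (AddPt.of u) (AddPt.of w))) (fun x => ?_)
    ⟨u, v, fun h => hab (congrArg AddPt.of h), by
      change con T (AddPt.of u) (AddPt.of u) = con T (AddPt.of u) (AddPt.of v)
      simp [con, ha, hb]⟩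
  · obtain ⟨x, hx⟩ := sol_of_quot _ hq
    obtain ⟨y, hy⟩ := sol_extend (wf_edg G) hTS ha (fun γ hγ =>
      sol_of_zc (z := AddPt.pt) (fun h => hT _ h rfl) ⟨_, ha⟩ (fun e he => by
        obtain ⟨h1, h2, h3⟩ := mem_inE.1 he
        exact ⟨h2, h3, (wf_edg G e h1).2.2⟩) hγ hz) hx
    exact hno (hasNZFlow_of_sol hy)
  · by_cases hx : AddPt.of x ∈ T
    · have : {w | (Setoid.ker (fun w => con T (AddPt.of u) (AddPt.of w))).r w x} = {w | AddPt.of w ∈ T} := by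
        ext w
        change con T (AddPt.of u) (AddPt.of w) = con T (AddPt.of u) (AddPt.of x) ↔ AddPt.of w ∈ T
        by_cases hw : AddPt.of w ∈ T
        · simp [con, hw, hx]
        · simp only [con, hw, hx, if_true, if_false, iff_false]
          rintro h; rw [h] at hw; exact hw ha
      rw [this]; exact hcon
    · have : {w | (Setoid.ker (fun w => con T (AddPt.of u) (AddPt.of w))).r w x} = {x} := by
        ext w
        change con T (AddPt.of u) (AddPt.of w) = con T (AddPt.of u) (AddPt.of x) ↔ w = x
        by_cases hw : AddPt.of w ∈ T
        · simp only [con, hw, hx, if_true, if_false]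
          constructor
          · rintro h; rw [← h] at hx; exact absurd ha hx
          · rintro rfl; exact absurd hw hx
        · simp [con, hw, hx]
      rw [this]
      exact SimpleGraph.Connected.of_subsingleton

/-! ### Graphs with at most three vertices -/

lemma iso_of_card_two [Fintype V] {G : SimpleGraph V} (hG : G.Connected)
    (h : Fintype.card V = 2) : Nonempty (G ≃g (⊤ : SimpleGraph (Fin 2))) := by
  have e : V ≃ Fin 2 := Fintype.equivFinOfCardEq h
  refine ⟨⟨e, ?_⟩⟩
  intro u v
  rw [SimpleGraph.top_adj]
  refine ⟨fun huv => ?_, fun huv h => huv.ne (e.injective h)⟩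
  have huv' : u ≠ v := fun h => huv (congrArg e h)
  have : Nontrivial V := ⟨u, v, huv'⟩
  obtain ⟨w, hw⟩ := hG.preconnected.exists_adj_of_nontrivial u
  have : w = v := by
    by_contra hwv
    have : ({u, v, w} : Finset V).card ≤ 2 := h ▸ Finset.card_le_univ _
    rw [Finset.card_eq_three.2 ⟨u, v, w, huv', hw.ne, fun h => hwv h.symm, rfl⟩] at this
    omega
  exact this ▸ hw

/-- On the triangle, identified with `ℤ₃`, the differences `v - u` form a nowhere-zero flow. -/
lemma hasNZFlow_triangle [Fintype V] [DecidableEq V] {G : SimpleGraph V}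
    (h : Fintype.card V = 3) (hG : G = ⊤) : HasNZFlow G (fun _ => (0 : ZMod 3)) := by
  have e : V ≃ ZMod 3 := Fintype.equivOfCardEq (by rw [h, ZMod.card])
  subst hG
  refine ⟨fun u v => e v - e u, fun u v _ => by ring, fun u v huv h => ?_, fun u => ?_⟩
  · exact huv (e.injective (sub_eq_zero.1 h).symm)
  · have h1 : ∑ v : V, (e v - e u) = 0 := by
      rw [Equiv.sum_comp e (fun a => a - e u), Finset.sum_sub_distrib, Finset.sum_const]
      have h2 : ∑ a : ZMod 3, a = 0 := by decide
      have h3 : (Finset.univ : Finset (ZMod 3)).card = 3 := by decide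
      rw [h2, h3, show (3 : ℕ) • e u = ((3 : ℕ) : ZMod 3) * e u from nsmul_eq_mul _ _,
        show ((3 : ℕ) : ZMod 3) = 0 from rfl, zero_mul, sub_zero]
    rw [Finset.sum_filter]
    refine Eq.trans ?_ h1
    refine Finset.sum_congr rfl fun v _ => ?_
    by_cases huv : u = v
    · subst huv; simp
    · simp [huv]

/-! ### The density bound -/

/-- `deficiency` applied to the whole vertex set; `cz n = 6` for `n ≥ 4`. -/
lemma edge_bound [Fintype V] [DecidableEq V] {G : SimpleGraph V}
    (hcrit : FlowCritical G (fun _ => (0 : ZMod 3))) :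
    Nat.card G.edgeSet + cz (Fintype.card V) + 4 ≤ 4 * Fintype.card V := by
  obtain ⟨v⟩ := hcrit.2.1.nonempty
  have h := deficiency (fun e he => (wf_edg G e he).2.2) ⟨_, mem_vts v⟩
    (fun T' hT' h2 => not_zc hcrit hT' h2)
  have h1 : inE (edg G) ends vts = edg G :=
    Finset.filter_true_of_mem fun e he => ⟨(wf_edg G e he).1, (wf_edg G e he).2.1⟩
  rwa [h1, card_edg, card_vts] at h

lemma card_edge_le_two [Fintype V] [DecidableEq V] {G : SimpleGraph V}
    (hno : ¬ HasNZFlow G (fun _ => (0 : ZMod 3))) (h3 : Fintype.card V = 3) :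
    Nat.card G.edgeSet ≤ 2 := by
  have h1 : Nat.card (⊤ : SimpleGraph V).edgeSet = 3 := by
    rw [Nat.card_eq_fintype_card, SimpleGraph.card_edgeSet,
      SimpleGraph.card_edgeFinset_top_eq_card_choose_two, h3]
    rfl
  have h2 : Nat.card G.edgeSet < Nat.card (⊤ : SimpleGraph V).edgeSet := by
    rw [Nat.card_coe_set_eq, Nat.card_coe_set_eq]
    refine Set.ncard_lt_ncard ?_ (Set.toFinite _)
    rw [SimpleGraph.edgeSet_ssubset_edgeSet]
    exact lt_top_iff_ne_top.2 fun h => hno (hasNZFlow_triangle h3 h)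
  omega

lemma hasNZFlow_of_card_one [Fintype V] [DecidableEq V] {G : SimpleGraph V}
    (h1 : Fintype.card V = 1) : HasNZFlow G (fun _ => (0 : ZMod 3)) := by
  have : Subsingleton V := Fintype.card_le_one_iff_subsingleton.1 h1.le
  refine ⟨fun _ _ => 0, fun _ _ _ => neg_zero.symm, fun u v h => ?_,
    fun _ => Finset.sum_const_zero⟩
  exact absurd (Subsingleton.elim u v) h.ne

end

end FlowDensity

/-- Every `ℤ₃`-flow-critical graph `G` not isomorphic to `K₂` satisfies
`|E(G)| ≤ 4|V(G)| − 10`. -/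
theorem flow_critical_density_four (V : Type) [Fintype V] [DecidableEq V]
    (G : SimpleGraph V)
    (hcrit : FlowCritical G (fun _ => (0 : ZMod 3)))
    (hK2 : ¬ Nonempty (G ≃g (⊤ : SimpleGraph (Fin 2)))) :
    (Nat.card G.edgeSet : ℤ) ≤ 4 * Fintype.card V - 10 := by
  have hE := FlowDensity.edge_bound hcrit
  obtain ⟨-, hG, hno, -⟩ := hcrit
  have hpos : 0 < Fintype.card V := Fintype.card_pos_iff.2 hG.nonempty
  have h1 : Fintype.card V ≠ 1 := fun h => hno (FlowDensity.hasNZFlow_of_card_one h)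
  have h2 : Fintype.card V ≠ 2 := fun h => hK2 (FlowDensity.iso_of_card_two hG h)
  by_cases h3 : Fintype.card V = 3
  · have := FlowDensity.card_edge_le_two hno h3
    omega
  · rw [FlowDensity.cz_four (by omega)] at hE
    omega
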